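/- Suppose S ⊆ ℝ is discrete, Y ⊆ ℝ^k is a closed perfect set, and Z ⊆ ℝ∖{0} is σ-compact. If λY = {λy : y ∈ Y} is gap-rich with exceptional set S for every λ ∈ Z, then for generic y ∈ LP(ℤ,Y) the spectrum of H_{λy} (the discrete Schrödinger operator with potential λ·y^♮) is a Cantor set of zero Hausdorff dimension for all λ ∈ Z. -/

import Mathlib

/-!
The spectra are shown to be nonempty, compact and without isolated points for every limit-periodic
`y`, and to have Hausdorff dimension zero for generic `y`; a set of dimension zero in `ℝ` has empty
interior. Throughout, `E ∉ σ(H_W)` is used in the form that `H_W - E` is bounded below by some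
`γ > 0` (`BddBelowAt`, `not_mem_spectrum_iff`), which is stable under perturbations of `W` and `E`.

*No isolated points* (`spectrum_preperfect`). An isolated point `E` of the spectrum of a symmetric
operator is an eigenvalue, and `H_W - E` is bounded below on the orthogonal complement of the
eigenspace (`bddBelow_orthogonal_ker_of_isolated`). Far translates of an eigenfunction by almost
periods are almost eigenfunctions, hence close to the eigenspace, although they are small at `0`
and `1`, where the elements of the eigenspace are determined by their values.

*Thin spectra are dense* (`exists_ball_thinCover`). Fix a compact set `K` of couplings and a
periodic `X`. Away from small intervals around the finitely many relevant points of `S`,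
gap-richness and compactness give finitely many periodic sequences `P₁, …, Pₘ` near `X` such that
for each coupling in `K` and each energy, one of them has a gap of size `γ` there
(`exists_gap_family`). Let `y` be the periodic concatenation of stretches of `P₁, …, Pₘ` of length
proportional to `N` (`exists_concat`). If `E` is in a gap of `Pⱼ`, the stretches of `Pⱼ` are
barriers: the mass at their middle is exponentially small in `N` (`barrier_decay`). Cutting `ℤ` in
these middles turns `H_y` into copies of one finite matrix, so `E` can be in the spectrum only if it
is exponentially close to one of the `O(N)` eigenvalues of this matrix (`bddBelowAt_of_barriers`).
So the spectrum is covered by `O(N)` intervals of length exponentially small in `N`, besides the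
small intervals around `S`, and this cover works for all sequences close to `y`.

*Genericity.* The sequences whose spectra have covers by intervals `Iᵢ` with
`∑ |Iᵢ| ^ (1 / (n + 1)) < 1 / (n + 1)` for all couplings in `K` thus contain a dense open set, and
Baire's theorem applies to countably many `n` and `K`. Such covers for all `n` force Hausdorff
dimension zero (`dimH_eq_zero_of_thinCover`).
-/

open Set MeasureTheory BoundedContinuousFunction

noncomputable section

/-- ℓ²(ℤ; ℝ). -/
abbrev Ell2 : Type := lp (fun _ : ℤ => ℝ) 2

/-- Spectrum of the discrete Schrödinger operator `H_W = Δ + W` on `ℓ²(ℤ)`: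
`E` lies in the spectrum iff `H_W - E` is not a linear bijection of `ℓ²(ℤ)`
(for bounded `W`, by the open mapping theorem this is equivalent to `H_W - E`
not being boundedly invertible). -/
def SchrodingerSpectrum (W : ℤ → ℝ) : Set ℝ :=
  {E : ℝ | ¬ ∃ T : Ell2 ≃ₗ[ℝ] Ell2,
      ∀ f : Ell2, ∀ n : ℤ,
        (T f) n = f (n - 1) + f (n + 1) + (W n - E) * f n}

/-- A Cantor set of zero Hausdorff dimension: nonempty, compact, without isolated
points, with empty interior, and of Hausdorff dimension zero. -/
def IsZeroDimCantor (s : Set ℝ) : Prop :=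
  s.Nonempty ∧ IsCompact s ∧ Preperfect s ∧ interior s = ∅ ∧ dimH s = 0

/-- Periodic bounded sequences. -/
def IsPeriodicSeq {α : Type*} [PseudoMetricSpace α] (W : ℤ →ᵇ α) : Prop :=
  ∃ q : ℕ, 0 < q ∧ ∀ n : ℤ, W (n + q) = W n

/-- The limit-periodic functions `ℤ → ℝ`: uniform limits of periodic functions. -/
def LPZ : Set (ℤ →ᵇ ℝ) := closure {W : ℤ →ᵇ ℝ | IsPeriodicSeq W}

/-- A subset of ℝ is discrete if it has no accumulation points. -/
def IsDiscreteSet (S : Set ℝ) : Prop := ∀ x : ℝ, ¬ AccPt x (Filter.principal S)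

/-- Periodic extension `w^{♯ℤ}` of a finite word `w`. -/
def perExt {α : Type*} [Zero α] {m : ℕ} (w : Fin m → α) : ℤ → α :=
  fun n =>
    if h : 0 < m then
      w ⟨(n % (m : ℤ)).toNat, by
        have h1 : 0 ≤ n % (m : ℤ) := Int.emod_nonneg n (by exact_mod_cast h.ne')
        have h2 : n % (m : ℤ) < (m : ℤ) := Int.emod_lt_of_pos n (by exact_mod_cast h)
        omega⟩
    else 0

/-- Aggregation `y^♮` of a sequence of blocks in `ℝ^k` into a potential `ℤ → ℝ`. -/
def agg (k : ℕ) (x : ℤ → (Fin k → ℝ)) : ℤ → ℝ :=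
  fun n =>
    if h : 0 < k then
      x (Int.fdiv n k) ⟨(n % (k : ℤ)).toNat, by
        have h1 : 0 ≤ n % (k : ℤ) := Int.emod_nonneg n (by exact_mod_cast h.ne')
        have h2 : n % (k : ℤ) < (k : ℤ) := Int.emod_lt_of_pos n (by exact_mod_cast h)
        omega⟩
    else 0

/-- `Y ⊆ ℝ^k` is gap-rich with exceptional set `S`: `S` is discrete and near any
word over `Y` there is a word over `Y` whose periodic Schrödinger operator has a
gap at any prescribed energy `E ∉ S`. -/
def GapRich (k : ℕ) (Y : Set (Fin k → ℝ)) (S : Set ℝ) : Prop :=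
  IsDiscreteSet S ∧
  ∀ E : ℝ, E ∉ S → ∀ m : ℕ, 0 < m → ∀ x : Fin m → (Fin k → ℝ), (∀ i, x i ∈ Y) →
    ∀ ε : ℝ, 0 < ε →
      ∃ l : ℕ, 0 < l ∧ ∃ y : Fin l → (Fin k → ℝ),
        (∀ i, y i ∈ Y) ∧
        (∀ j : ℤ, dist (perExt x j) (perExt y j) < ε) ∧
        E ∉ SchrodingerSpectrum (agg k (perExt y))

/-- The periodic elements of `Y^ℤ`. -/
def PerY (k : ℕ) (Y : Set (Fin k → ℝ)) : Set (ℤ →ᵇ (Fin k → ℝ)) :=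
  {x | IsPeriodicSeq x ∧ ∀ n : ℤ, x n ∈ Y}

/-- The limit-periodic elements of `Y^ℤ`: uniform limits of periodic elements. -/
def LPY (k : ℕ) (Y : Set (Fin k → ℝ)) : Set (ℤ →ᵇ (Fin k → ℝ)) := closure (PerY k Y)

/-! ### Symmetric operators that are bounded below -/

section Abstract

variable {F : Type*} [NormedAddCommGroup F] [InnerProductSpace ℝ F]

theorem sq_norm_sub_smul_ge {A : F →L[ℝ] F} {s : ℝ} (h : ∀ u, |s| * ‖u‖ ≤ ‖A u - s • u‖)
    (u : F) : 2 * s * inner ℝ (A u) u ≤ ‖A u‖ ^ 2 := by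
  have h1 := h u
  have h2 : (|s| * ‖u‖) ^ 2 ≤ ‖A u - s • u‖ ^ 2 := by gcongr
  rw [norm_sub_sq_real, norm_smul, inner_smul_right, mul_pow, mul_pow, Real.norm_eq_abs] at h2
  linarith

/-- A symmetric operator that is bounded below is bijective: its range is closed, and the
orthogonal complement of the range is the trivial kernel. -/
theorem bijective_of_bddBelow [CompleteSpace F] {A : F →L[ℝ] F}
    (hA : ∀ x y, inner ℝ (A x) y = inner ℝ x (A y)) {c : ℝ} (hc : 0 < c)
    (h : ∀ u, c * ‖u‖ ≤ ‖A u‖) : Function.Bijective A := by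
  have hanti : AntilipschitzWith c.toNNReal⁻¹ A := by
    refine A.antilipschitz_of_bound fun x => ?_
    have := h x
    rw [NNReal.coe_inv, Real.coe_toNNReal _ hc.le, inv_mul_eq_div, le_div_iff₀ hc]; linarith
  refine ⟨hanti.injective, ?_⟩
  have hcl : IsClosed (A.range : Set F) := by
    have := hanti.isClosed_range A.uniformContinuous
    rw [LinearMap.coe_range]; exact this
  have hcomp : CompleteSpace A.range := hcl.completeSpace_coe
  have : A.range = ⊤ := by
    rw [← Submodule.orthogonal_eq_bot_iff, eq_bot_iff]
    intro v hv
    rw [Submodule.mem_orthogonal] at hv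
    have h0 : A v = 0 := by
      rw [← inner_self_eq_zero (𝕜 := ℝ), ← hA]
      exact hv _ ⟨A v, rfl⟩
    have := h v
    rw [h0, norm_zero] at this
    have : ‖v‖ = 0 := le_antisymm (by nlinarith [norm_nonneg v]) (norm_nonneg v)
    simpa using this
  intro y
  have : y ∈ A.range := by rw [this]; trivial
  simpa using this

/-- If no `t ∈ (-γ, γ)` lies in the spectrum of a symmetric operator `A`, then `A` is bounded
below by `γ`. Otherwise the infimum `m < γ ^ 2` of `‖A u‖ ^ 2` over unit vectors would put `√m` or
`-√m` into the approximate point spectrum, since almost minimizers are almost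
eigenvectors of `A ^ 2`. -/
theorem bddBelow_of_gap {A : F →L[ℝ] F}
    (hA : ∀ x y, inner ℝ (A x) y = inner ℝ x (A y)) {γ : ℝ} (hγ : 0 ≤ γ)
    (h : ∀ t, |t| < γ → ∃ c > 0, ∀ u, c * ‖u‖ ≤ ‖A u - t • u‖) (u : F) :
    γ * ‖u‖ ≤ ‖A u‖ := by
  by_contra! hu
  have hu0 : u ≠ 0 := by
    rintro rfl
    simp at hu
  set T : Set ℝ := {r | ∃ v : F, v ≠ 0 ∧ r = ‖A v‖ ^ 2 / ‖v‖ ^ 2} with hT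
  have hTne : T.Nonempty := ⟨_, u, hu0, rfl⟩
  have hTbd : BddBelow T := ⟨0, by rintro _ ⟨v, -, rfl⟩; positivity⟩
  set m := sInf T with hm
  have hm0 : 0 ≤ m := le_csInf hTne (by rintro _ ⟨v, -, rfl⟩; positivity)
  have hmle : ∀ v, m * ‖v‖ ^ 2 ≤ ‖A v‖ ^ 2 := by
    intro v
    by_cases hv : v = 0
    · simp [hv]
    have := csInf_le hTbd (show _ ∈ T from ⟨v, hv, rfl⟩)
    rwa [← hm, le_div_iff₀ (by positivity)] at this
  have hmγ : m < γ ^ 2 := by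
    refine lt_of_le_of_lt (csInf_le hTbd ⟨u, hu0, rfl⟩) ?_
    rw [div_lt_iff₀ (by positivity), ← mul_pow]
    gcongr
  have hs : |√m| < γ := by
    rw [abs_of_nonneg (Real.sqrt_nonneg _)]
    exact (Real.sqrt_lt' (by nlinarith)).2 hmγ
  obtain ⟨c₁, hc₁, h₁⟩ := h (√m) hs
  obtain ⟨c₂, hc₂, h₂⟩ := h (-√m) (by rwa [abs_neg])
  set B : F →L[ℝ] F := A.comp A - m • ContinuousLinearMap.id ℝ F with hB
  have hBv : ∀ v, B v = A (A v) - m • v := fun v => by simp [hB]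
  have hBlow : ∀ v, c₁ * c₂ * ‖v‖ ≤ ‖B v‖ := by
    intro v
    have e : B v = A (A v - (-√m) • v) - √m • (A v - (-√m) • v) := by
      have hsq : √m * √m = m := Real.mul_self_sqrt hm0
      rw [hBv]
      simp only [neg_smul, sub_neg_eq_add, map_add, map_smul, smul_add, smul_smul, hsq]
      abel
    rw [e]
    have := h₁ (A v - (-√m) • v)
    have := h₂ v
    nlinarith
  have hBin : ∀ v, inner ℝ (B v) v = ‖A v‖ ^ 2 - m * ‖v‖ ^ 2 := by
    intro v
    rw [hBv, inner_sub_left, hA, real_inner_self_eq_norm_sq, inner_smul_left,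
      real_inner_self_eq_norm_sq]
    simp
  have hBsym : ∀ x y, inner ℝ (B x) y = inner ℝ x (B y) := by
    intro x y
    rw [hBv, hBv, inner_sub_left, inner_sub_right, hA, hA, inner_smul_left, inner_smul_right]
    simp
  set K := ‖B‖ + 1 with hK
  have hKpos : 0 < K := by positivity
  -- The form of `B` is nonnegative, in particular at `K • v - B v`.
  have key : ∀ v, ‖B v‖ ^ 2 ≤ K * (‖A v‖ ^ 2 - m * ‖v‖ ^ 2) := by
    intro v
    have hp : 0 ≤ inner ℝ (B (K • v - B v)) (K • v - B v) := by
      rw [hBin]; linarith [hmle (K • v - B v)]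
    have hbb : inner ℝ (B (B v)) (B v) ≤ K * ‖B v‖ ^ 2 := by
      calc inner ℝ (B (B v)) (B v) ≤ ‖B (B v)‖ * ‖B v‖ := real_inner_le_norm _ _
        _ ≤ (‖B‖ * ‖B v‖) * ‖B v‖ := by gcongr; exact B.le_opNorm _
        _ ≤ K * ‖B v‖ ^ 2 := by nlinarith [sq_nonneg ‖B v‖]
    rw [map_sub, map_smul, inner_sub_left, inner_sub_right, inner_sub_right, inner_smul_left,
      inner_smul_left, inner_smul_right, inner_smul_right, hBsym (B v) v,
      real_inner_self_eq_norm_sq] at hp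
    simp only [conj_trivial] at hp
    rw [← hBin]
    have : K * ‖B v‖ ^ 2 ≤ K * (K * inner ℝ (B v) v) := by nlinarith
    exact le_of_mul_le_mul_left this hKpos
  have hlt : m < m + (c₁ * c₂) ^ 2 / K := by
    have : 0 < (c₁ * c₂) ^ 2 / K := by positivity
    linarith
  obtain ⟨_, ⟨v, hv, rfl⟩, hvlt⟩ := exists_lt_of_csInf_lt hTne (hm ▸ hlt)
  have hvn : 0 < ‖v‖ ^ 2 := by positivity
  rw [div_lt_iff₀ hvn] at hvlt
  have h3 := key v
  have h4 : (c₁ * c₂ * ‖v‖) ^ 2 ≤ ‖B v‖ ^ 2 := by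
    gcongr
    exact hBlow v
  have h5 : K * (‖A v‖ ^ 2 - m * ‖v‖ ^ 2) < (c₁ * c₂) ^ 2 * ‖v‖ ^ 2 := by
    have : K * ((m + (c₁ * c₂) ^ 2 / K) * ‖v‖ ^ 2 - m * ‖v‖ ^ 2) = (c₁ * c₂) ^ 2 * ‖v‖ ^ 2 := by
      field_simp; ring
    rw [← this]
    gcongr
  rw [mul_pow] at h4
  linarith

/-- If the spectrum of the symmetric operator `A` meets `(-δ, δ)` at most in `0`, then `A` is
bounded below by `δ` on `(ker A)ᗮ`. The gaps `(0, δ)` and `(-δ, 0)` say that `B = A ^ 2 - δ A` and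
`C = A ^ 2 + δ A` are nonnegative, hence so is `B * C * (B + C) = 2 A ^ 4 (A ^ 2 - δ ^ 2)`;
this is the bound on the range of `A ^ 2`, which is dense in `(ker A)ᗮ`. -/
theorem bddBelow_orthogonal_ker_of_isolated [CompleteSpace F] {A : F →L[ℝ] F}
    (hA : ∀ x y, inner ℝ (A x) y = inner ℝ x (A y)) {δ : ℝ} (hδ : 0 < δ)
    (h : ∀ t, t ≠ 0 → |t| < δ → ∃ c > 0, ∀ u, c * ‖u‖ ≤ ‖A u - t • u‖)
    (v : F) (hv : v ∈ A.kerᗮ) : δ * ‖v‖ ≤ ‖A v‖ := by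
  have gap : ∀ s : ℝ, |s| = δ / 2 → ∀ u, |s| * ‖u‖ ≤ ‖A u - s • u‖ := by
    intro s hs
    have h1 := bddBelow_of_gap (A := A - s • ContinuousLinearMap.id ℝ F) (γ := |s|)
      (fun x y => by
        simp only [_root_.sub_apply, _root_.smul_apply,
          ContinuousLinearMap.id_apply, inner_sub_left, inner_sub_right, hA, inner_smul_left,
          inner_smul_right, conj_trivial]) (abs_nonneg _)
      (fun t ht => by
        have hst : s + t ≠ 0 := by
          intro h0
          have : t = -s := by linarith
          rw [this, abs_neg] at ht
          exact lt_irrefl _ ht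
        obtain ⟨c, hc, hcu⟩ := h (s + t) hst
          (lt_of_le_of_lt (abs_add_le s t) (by linarith))
        refine ⟨c, hc, fun u => ?_⟩
        have := hcu u
        rwa [add_smul, ← sub_sub] at this)
    simpa using h1
  have hpos : ∀ u, δ * inner ℝ (A u) u ≤ ‖A u‖ ^ 2 := fun u => by
    have := sq_norm_sub_smul_ge (gap (δ / 2) (abs_of_pos (by positivity))) u
    linarith
  have hneg : ∀ u, -δ * inner ℝ (A u) u ≤ ‖A u‖ ^ 2 := fun u => by
    have := sq_norm_sub_smul_ge (gap (-(δ / 2)) (by rw [abs_neg]; exact abs_of_pos (by positivity))) u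
    linarith
  have hrange : ∀ u, δ * ‖A (A u)‖ ≤ ‖A (A (A u))‖ := by
    intro u
    have h1 := hneg (A (A u) - δ • A u)
    have h2 := hpos (A (A u) + δ • A u)
    set a := A u
    set b := A a with hb
    set d := A b with hd
    have e1 : inner ℝ d a = ‖b‖ ^ 2 := by rw [hd, hA, real_inner_self_eq_norm_sq]
    simp only [map_sub, map_add, map_smul, ← hd, ← hb] at h1 h2
    rw [norm_sub_sq_real, inner_sub_left, inner_sub_right, inner_sub_right] at h1
    rw [norm_add_sq_real, inner_add_left, inner_add_right, inner_add_right] at h2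
    simp only [inner_smul_left, inner_smul_right, conj_trivial, e1, norm_smul,
      real_inner_self_eq_norm_sq, Real.norm_eq_abs, mul_pow, sq_abs] at h1 h2
    have e2 : (δ * ‖b‖) ^ 2 ≤ ‖d‖ ^ 2 := by nlinarith
    exact (abs_le_of_sq_le_sq' e2 (norm_nonneg _)).2
  have hadj : (A.comp A).adjoint = A.comp A := by
    symm
    rw [ContinuousLinearMap.eq_adjoint_iff]
    intro x y
    simp [hA]
  have hker : A.ker = (A.comp A).ker := by
    ext x
    simp only [LinearMap.mem_ker, ContinuousLinearMap.coe_coe, ContinuousLinearMap.comp_apply]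
    refine ⟨fun hx => by rw [hx, map_zero], fun hx => ?_⟩
    rw [← inner_self_eq_zero (𝕜 := ℝ), hA, hx, inner_zero_right]
  rw [hker, ContinuousLinearMap.orthogonal_ker, hadj] at hv
  have hcl : IsClosed {w : F | δ * ‖w‖ ≤ ‖A w‖} :=
    isClosed_le (by fun_prop) (by fun_prop)
  have hsub : closure ((A.comp A).range : Set F) ⊆ {w : F | δ * ‖w‖ ≤ ‖A w‖} := by
    refine hcl.closure_subset_iff.2 ?_
    rintro _ ⟨u, rfl⟩
    exact hrange u
  exact hsub hv

end Abstract

/-! ### Schrödinger operators on `ℓ²(ℤ)` -/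

theorem hasSum_sq (f : Ell2) : HasSum (fun n => f n ^ 2) (‖f‖ ^ 2) := by
  have := lp.hasSum_norm (p := 2) (by norm_num) f
  simpa using this

/-- The element of `ℓ²(ℤ)` given by a square-summable sequence. -/
def mkEll2 (f : ℤ → ℝ) (h : Summable fun n => f n ^ 2) : Ell2 :=
  ⟨f, memℓp_gen (by simpa using h)⟩

@[simp] theorem mkEll2_apply (f : ℤ → ℝ) (h : Summable fun n => f n ^ 2) (n : ℤ) :
    mkEll2 f h n = f n := rfl

theorem norm_le_of_abs_le {f g : Ell2} (h : ∀ n, |f n| ≤ |g n|) : ‖f‖ ≤ ‖g‖ := by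
  have h2 : ‖f‖ ^ 2 ≤ ‖g‖ ^ 2 :=
    hasSum_le (fun n => sq_le_sq.2 (h n)) (hasSum_sq f) (hasSum_sq g)
  exact (abs_le_of_sq_le_sq' h2 (norm_nonneg _)).2

theorem abs_apply_le_norm (f : Ell2) (n : ℤ) : |f n| ≤ ‖f‖ := by
  have := lp.norm_apply_le_norm (p := 2) (by norm_num) f n
  simpa using this

theorem summable_shift_sq (a : ℤ) (f : Ell2) : Summable fun n => f (n + a) ^ 2 :=
  (Equiv.addRight a).summable_iff (f := fun n => f n ^ 2) |>.2 (hasSum_sq f).summable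

theorem norm_mkEll2_shift (a : ℤ) (f : Ell2) :
    ‖mkEll2 (fun n => f (n + a)) (summable_shift_sq a f)‖ = ‖f‖ := by
  have h1 := hasSum_sq (mkEll2 (fun n => f (n + a)) (summable_shift_sq a f))
  have h2 : HasSum (fun n => f (n + a) ^ 2) (‖f‖ ^ 2) :=
    (Equiv.addRight a).hasSum_iff (f := fun n => f n ^ 2) |>.2 (hasSum_sq f)
  exact (sq_eq_sq₀ (norm_nonneg _) (norm_nonneg _)).1 (h1.unique h2)

/-- Translation `(shiftOp a f) n = f (n + a)`. -/
def shiftOp (a : ℤ) : Ell2 →ₗᵢ[ℝ] Ell2 where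
  toFun f := mkEll2 (fun n => f (n + a)) (summable_shift_sq a f)
  map_add' f g := by ext n; rfl
  map_smul' c f := by ext n; rfl
  norm_map' f := norm_mkEll2_shift a f

@[simp] theorem shiftOp_apply (a : ℤ) (f : Ell2) (n : ℤ) : shiftOp a f n = f (n + a) := rfl

theorem summable_mul_sq (w : ℤ →ᵇ ℝ) (f : Ell2) : Summable fun n => (w n * f n) ^ 2 := by
  refine Summable.of_nonneg_of_le (fun n => sq_nonneg _) (fun n => ?_)
    ((hasSum_sq f).summable.mul_left (‖w‖ ^ 2))
  rw [mul_pow]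
  have : w n ^ 2 ≤ ‖w‖ ^ 2 := by
    rw [← sq_abs (w n)]
    have := w.norm_coe_le_norm n
    rw [Real.norm_eq_abs] at this
    gcongr
  gcongr

/-- Multiplication by a bounded sequence. -/
def mulOp (w : ℤ →ᵇ ℝ) : Ell2 →L[ℝ] Ell2 :=
  LinearMap.mkContinuous
    { toFun := fun f => mkEll2 (fun n => w n * f n) (summable_mul_sq w f)
      map_add' := fun f g => by ext n; simp [mul_add]
      map_smul' := fun c f => by ext n; simp [mul_left_comm] } ‖w‖ (fun f => by
    have h : ‖mkEll2 (fun n => w n * f n) (summable_mul_sq w f)‖ ≤ ‖(‖w‖ • f : Ell2)‖ := by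
      refine norm_le_of_abs_le fun n => ?_
      rw [mkEll2_apply, abs_mul]
      simp only [lp.coeFn_smul, Pi.smul_apply, smul_eq_mul, abs_mul, abs_norm]
      have := w.norm_coe_le_norm n
      rw [Real.norm_eq_abs] at this
      gcongr
    rwa [norm_smul, norm_norm] at h)

@[simp] theorem mulOp_apply (w : ℤ →ᵇ ℝ) (f : Ell2) (n : ℤ) : mulOp w f n = w n * f n := rfl

theorem norm_mulOp_le (w : ℤ →ᵇ ℝ) (f : Ell2) : ‖mulOp w f‖ ≤ ‖w‖ * ‖f‖ :=
  (LinearMap.mkContinuous_norm_le _ (norm_nonneg w) _ |> fun h =>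
    (mulOp w).le_of_opNorm_le h f)

/-- The bounded operator `H_W - E`. -/
def schrOp (W : ℤ →ᵇ ℝ) (E : ℝ) : Ell2 →L[ℝ] Ell2 :=
  (shiftOp (-1)).toContinuousLinearMap + (shiftOp 1).toContinuousLinearMap + mulOp W
    - E • ContinuousLinearMap.id ℝ Ell2

theorem schrOp_eq (W : ℤ →ᵇ ℝ) (E : ℝ) (f : Ell2) :
    schrOp W E f = shiftOp (-1) f + shiftOp 1 f + mulOp W f - E • f := rfl

theorem schrOp_apply (W : ℤ →ᵇ ℝ) (E : ℝ) (f : Ell2) (n : ℤ) :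
    schrOp W E f n = f (n - 1) + f (n + 1) + (W n - E) * f n := by
  rw [schrOp_eq]
  change f (n + -1) + f (n + 1) + W n * f n - E * f n = _
  rw [← sub_eq_add_neg]
  ring

theorem inner_shiftOp (a : ℤ) (f g : Ell2) :
    inner ℝ (shiftOp a f) g = inner ℝ f (shiftOp (-a) g) := by
  rw [← (shiftOp (-a)).inner_map_map (shiftOp a f) g]
  congr 1
  ext n
  simp

theorem schrOp_symm (W : ℤ →ᵇ ℝ) (E : ℝ) (f g : Ell2) :
    inner ℝ (schrOp W E f) g = inner ℝ f (schrOp W E g) := by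
  have hm : inner ℝ (mulOp W f) g = inner ℝ f (mulOp W g) := by
    rw [lp.inner_eq_tsum, lp.inner_eq_tsum]
    refine tsum_congr fun n => ?_
    simp
    ring
  rw [schrOp_eq, schrOp_eq]
  simp only [inner_sub_left, inner_add_left, inner_sub_right, inner_add_right, inner_shiftOp, hm,
    inner_smul_left, inner_smul_right, conj_trivial, neg_neg]
  ring

/-- `H_W - E` is bounded below by `γ`. For some `γ > 0` this says that `E` is not in the
spectrum. -/
def BddBelowAt (W : ℤ →ᵇ ℝ) (E γ : ℝ) : Prop := ∀ u : Ell2, γ * ‖u‖ ≤ ‖schrOp W E u‖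

theorem BddBelowAt.mono {W : ℤ →ᵇ ℝ} {E γ γ' : ℝ} (h : BddBelowAt W E γ) (hγ : γ' ≤ γ) :
    BddBelowAt W E γ' := fun u =>
  (mul_le_mul_of_nonneg_right hγ (norm_nonneg u)).trans (h u)

theorem not_mem_spectrum_iff (W : ℤ →ᵇ ℝ) (E : ℝ) :
    E ∉ SchrodingerSpectrum W ↔ ∃ c > 0, BddBelowAt W E c := by
  rw [SchrodingerSpectrum, mem_ofPred_eq, not_not]
  constructor
  · rintro ⟨T, hT⟩
    have hTe : ∀ f, T f = schrOp W E f := fun f => by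
      ext n; rw [hT, schrOp_apply]
    have hcont : Continuous T := by
      have : (T : Ell2 → Ell2) = schrOp W E := funext hTe
      rw [this]; exact (schrOp W E).continuous
    let T' := T.toContinuousLinearEquivOfContinuous hcont
    have hT' : ∀ f, T' f = schrOp W E f := fun f => hTe f
    have hpos : 0 < ‖(T'.symm : Ell2 →L[ℝ] Ell2)‖ + 1 := by positivity
    refine ⟨(‖(T'.symm : Ell2 →L[ℝ] Ell2)‖ + 1)⁻¹, by positivity, fun u => ?_⟩
    rw [inv_mul_le_iff₀ hpos]
    have h1 : ‖u‖ ≤ ‖(T'.symm : Ell2 →L[ℝ] Ell2)‖ * ‖schrOp W E u‖ := by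
      have := (T'.symm : Ell2 →L[ℝ] Ell2).le_opNorm (T' u)
      rw [hT'] at this
      have h2 : (T'.symm : Ell2 →L[ℝ] Ell2) (schrOp W E u) = u := by
        rw [← hT']; exact T'.symm_apply_apply u
      rwa [h2] at this
    nlinarith [norm_nonneg (schrOp W E u)]
  · rintro ⟨c, hc, h⟩
    have hb := bijective_of_bddBelow (schrOp_symm W E) hc h
    exact ⟨LinearEquiv.ofBijective (schrOp W E : Ell2 →ₗ[ℝ] Ell2) hb,
      fun f n => schrOp_apply W E f n⟩

theorem BddBelowAt.perturb {W W' : ℤ →ᵇ ℝ} {E E' γ a b : ℝ} (h : BddBelowAt W E γ)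
    (hW : ‖W - W'‖ ≤ a) (hE : |E - E'| ≤ b) : BddBelowAt W' E' (γ - a - b) := by
  intro u
  have e : schrOp W E u = schrOp W' E' u + (mulOp (W - W') u - (E - E') • u) := by
    ext n
    simp only [schrOp_apply, lp.coeFn_add, lp.coeFn_sub, Pi.add_apply, Pi.sub_apply, mulOp_apply,
      lp.coeFn_smul, Pi.smul_apply, smul_eq_mul, BoundedContinuousFunction.coe_sub]
    ring
  have h1 := h u
  rw [e] at h1
  have h2 := norm_add_le (schrOp W' E' u) (mulOp (W - W') u - (E - E') • u)
  have h3 := norm_sub_le (mulOp (W - W') u) ((E - E') • u)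
  have h4 := norm_mulOp_le (W - W') u
  rw [norm_smul, Real.norm_eq_abs] at h3
  nlinarith [norm_nonneg u]

theorem bddBelowAt_of_large (W : ℤ →ᵇ ℝ) (E : ℝ) : BddBelowAt W E (|E| - 2 - ‖W‖) := by
  intro u
  have e : E • u = shiftOp (-1) u + shiftOp 1 u + mulOp W u - schrOp W E u := by
    rw [schrOp_eq]; abel
  have h1 : ‖E • u‖ ≤ ‖u‖ + ‖u‖ + ‖W‖ * ‖u‖ + ‖schrOp W E u‖ := by
    rw [e]
    refine (norm_sub_le _ _).trans ?_
    gcongr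
    refine (norm_add_le _ _).trans ?_
    refine add_le_add ((norm_add_le _ _).trans ?_) (norm_mulOp_le W u)
    rw [LinearIsometry.norm_map, LinearIsometry.norm_map]
  rw [norm_smul, Real.norm_eq_abs] at h1
  linarith

theorem schrOp_sub_smul (W : ℤ →ᵇ ℝ) (E t : ℝ) (u : Ell2) :
    schrOp W E u - t • u = schrOp W (E + t) u := by
  rw [schrOp_eq, schrOp_eq, add_smul]; abel

/-- The translated potential `n ↦ W (n + a)`. -/
def translatePot (a : ℤ) (W : ℤ →ᵇ ℝ) : ℤ →ᵇ ℝ :=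
  BoundedContinuousFunction.ofNormedAddCommGroupDiscrete (fun n => W (n + a)) ‖W‖
    (fun n => W.norm_coe_le_norm (n + a))

@[simp] theorem translatePot_apply (a : ℤ) (W : ℤ →ᵇ ℝ) (n : ℤ) : translatePot a W n = W (n + a) := rfl

theorem schrOp_translate (a : ℤ) (W : ℤ →ᵇ ℝ) (E : ℝ) (u : Ell2) :
    schrOp (translatePot a W) E (shiftOp a u) = shiftOp a (schrOp W E u) := by
  ext n
  simp only [schrOp_apply, shiftOp_apply, translatePot_apply]
  rw [show n - 1 + a = n + a - 1 by ring, show n + 1 + a = n + a + 1 by ring]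

theorem BddBelowAt.translate {W : ℤ →ᵇ ℝ} {E γ : ℝ} (h : BddBelowAt W E γ) (a : ℤ) :
    BddBelowAt (translatePot a W) E γ := by
  intro u
  have e : u = shiftOp a (shiftOp (-a) u) := by ext n; simp
  have h1 := h (shiftOp (-a) u)
  rw [LinearIsometry.norm_map] at h1
  rw [e, schrOp_translate, LinearIsometry.norm_map, LinearIsometry.norm_map,
    LinearIsometry.norm_map]
  exact h1

theorem BddBelowAt.of_translate {W : ℤ →ᵇ ℝ} {E γ : ℝ} {a : ℤ}
    (h : BddBelowAt (translatePot a W) E γ) : BddBelowAt W E γ := by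
  have := h.translate (-a)
  convert this using 1
  ext n
  simp

/-! ### Topology of the spectrum -/

theorem exists_ne_zero_Ell2 : ∃ u : Ell2, u ≠ 0 := by
  refine ⟨lp.single 2 (0 : ℤ) (1 : ℝ), fun h => ?_⟩
  have := congrArg (fun f : Ell2 => f 0) h
  simp at this

theorem spectrum_nonempty (W : ℤ →ᵇ ℝ) : (SchrodingerSpectrum W).Nonempty := by
  by_contra hne
  rw [Set.not_nonempty_iff_eq_empty] at hne
  have hall : ∀ E, ∃ c > 0, BddBelowAt W E c := fun E =>
    (not_mem_spectrum_iff W E).1 (by rw [hne]; exact notMem_empty E)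
  obtain ⟨u, hu⟩ := exists_ne_zero_Ell2
  have hpos : 0 < ‖u‖ := norm_pos_iff.2 hu
  have h := bddBelow_of_gap (schrOp_symm W 0) (γ := ‖schrOp W 0‖ + 1) (by positivity)
    (fun t _ => by
      obtain ⟨c, hc, h⟩ := hall (0 + t)
      exact ⟨c, hc, fun u => by rw [schrOp_sub_smul]; exact h u⟩) u
  have h2 := (schrOp W 0).le_opNorm u
  nlinarith

theorem spectrum_isCompact (W : ℤ →ᵇ ℝ) : IsCompact (SchrodingerSpectrum W) := by
  refine Metric.isCompact_of_isClosed_isBounded ?_ ?_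
  · rw [← isOpen_compl_iff, Metric.isOpen_iff]
    intro E hE
    obtain ⟨c, hc, h⟩ := (not_mem_spectrum_iff W E).1 hE
    refine ⟨c, hc, fun E' hE' => (not_mem_spectrum_iff W E').2 ?_⟩
    rw [Metric.mem_ball, dist_comm, Real.dist_eq] at hE'
    exact ⟨c - 0 - |E - E'|, by linarith, h.perturb (by simp) le_rfl⟩
  · refine (Metric.isBounded_closedBall (x := (0 : ℝ)) (r := 2 + ‖W‖)).subset fun E hE => ?_
    rw [mem_closedBall_zero_iff, Real.norm_eq_abs]
    by_contra! hlt
    exact (not_mem_spectrum_iff W E).2 ⟨_, by linarith, bddBelowAt_of_large W E⟩ hE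

/-- Every solution of `(H_W - E) w = 0` is determined by its values at `0` and `1`, so the
norm of an eigenfunction is controlled by these values. -/
theorem exists_norm_le_of_mem_ker (W : ℤ →ᵇ ℝ) (E : ℝ) :
    ∃ K : ℝ, 0 < K ∧ ∀ w ∈ (schrOp W E).ker, ∀ a, |w 0| ≤ a → |w 1| ≤ a → ‖w‖ ≤ K * a := by
  let f : (schrOp W E).ker →ₗ[ℝ] ℝ × ℝ :=
    { toFun := fun w => ((w : Ell2) 0, (w : Ell2) 1)
      map_add' := fun _ _ => rfl
      map_smul' := fun _ _ => rfl }
  have hf : LinearMap.ker f = ⊥ := by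
    rw [LinearMap.ker_eq_bot']
    rintro ⟨w, hw⟩ h0
    have hw0 : w 0 = 0 := congrArg Prod.fst h0
    have hw1 : w 1 = 0 := congrArg Prod.snd h0
    have hrec : ∀ n, w (n - 1) + w (n + 1) + (W n - E) * w n = 0 := by
      intro n
      rw [← schrOp_apply]
      have h : schrOp W E w = 0 := hw
      rw [h]; rfl
    have hup : ∀ n : ℕ, w n = 0 ∧ w (n + 1) = 0 := by
      intro n
      induction n with
      | zero => exact ⟨by simpa using hw0, by simpa using hw1⟩
      | succ n ih =>
        refine ⟨by push_cast; exact ih.2, ?_⟩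
        have := hrec (n + 1)
        rw [add_sub_cancel_right, ih.1, ih.2] at this
        push_cast
        linarith
    have hdown : ∀ n : ℕ, w (-n) = 0 ∧ w (-n + 1) = 0 := by
      intro n
      induction n with
      | zero => exact ⟨by simpa using hw0, by simpa using hw1⟩
      | succ n ih =>
        have := hrec (-n)
        rw [ih.1, ih.2] at this
        push_cast
        refine ⟨?_, ?_⟩
        · rw [show (-((n : ℤ) + 1)) = -n - 1 by ring]; linarith
        · rw [show (-((n : ℤ) + 1) + 1) = -n by ring]; exact ih.1
    have hz : w = 0 := by
      ext n
      obtain ⟨m, rfl | rfl⟩ := n.eq_nat_or_neg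
      · exact (hup m).1
      · exact (hdown m).1
    exact Subtype.ext hz
  have hfin : FiniteDimensional ℝ (schrOp W E).ker :=
    Module.Finite.of_injective f (LinearMap.ker_eq_bot.1 hf)
  obtain ⟨K, hK, hanti⟩ := f.exists_antilipschitzWith hf
  refine ⟨K, by exact_mod_cast hK, fun w hw a h0 h1 => ?_⟩
  have := hanti.le_mul_dist ⟨w, hw⟩ 0
  rw [map_zero, dist_zero_right, dist_zero_right] at this
  refine this.trans ?_
  gcongr
  exact max_le h0 h1

/-- The spectrum of an almost periodic operator has no isolated points. An isolated point `E` is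
an eigenvalue and `H_W - E` is bounded below off the eigenspace, which is finite-dimensional. A
far translate of an eigenfunction by an almost period almost lies in the eigenspace although
it is almost zero at `0` and `1`. -/
theorem spectrum_preperfect (W : ℤ →ᵇ ℝ)
    (hW : ∀ ε > 0, ∃ p : ℕ, 0 < p ∧ ∀ i : ℕ, ∀ n : ℤ, |W (n + i * p) - W n| ≤ ε) :
    Preperfect (SchrodingerSpectrum W) := by
  intro E hE
  rw [accPt_iff_nhds]
  by_contra! hcon
  obtain ⟨U, hU, hUE⟩ := hcon
  obtain ⟨δ, hδ, hball⟩ := Metric.mem_nhds_iff.1 hU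
  have hiso : ∀ t, t ≠ 0 → |t| < δ → ∃ c > 0, ∀ u, c * ‖u‖ ≤ ‖schrOp W E u - t • u‖ := by
    intro t ht htδ
    have hnot : E + t ∉ SchrodingerSpectrum W := fun hmem => by
      have := hUE (E + t) ⟨hball (by simpa [Metric.mem_ball, Real.dist_eq] using htδ), hmem⟩
      exact ht (by linarith)
    obtain ⟨c, hc, h⟩ := (not_mem_spectrum_iff W (E + t)).1 hnot
    exact ⟨c, hc, fun u => by rw [schrOp_sub_smul]; exact h u⟩
  have hlow := bddBelow_orthogonal_ker_of_isolated (schrOp_symm W E) hδ hiso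
  have hcl : IsClosed ((schrOp W E).ker : Set Ell2) := (schrOp W E).isClosed_ker
  have : CompleteSpace (schrOp W E).ker := hcl.completeSpace_coe
  obtain ⟨ψ, hψ, hψ0⟩ : ∃ ψ ∈ (schrOp W E).ker, ψ ≠ 0 := by
    by_contra! hker
    have hbot : (schrOp W E).ker = ⊥ := by
      rw [eq_bot_iff]; intro w hw; simpa using hker w hw
    rw [hbot, Submodule.bot_orthogonal_eq_top] at hlow
    exact (not_mem_spectrum_iff W E).2 ⟨δ, hδ, fun u => hlow u trivial⟩ hE
  have hψpos : 0 < ‖ψ‖ := norm_pos_iff.2 hψ0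
  have hψker : schrOp W E ψ = 0 := hψ
  obtain ⟨K, hK, hKw⟩ := exists_norm_le_of_mem_ker W E
  set θ : ℝ := 1 / (2 * K + 2) with hθ
  have hθpos : 0 < θ := by positivity
  obtain ⟨p, hp, hap⟩ := hW (δ * θ) (by positivity)
  have hdecay : ∀ b : ℤ, ∀ᶠ i : ℕ in Filter.atTop, |ψ (b + i * p)| ≤ θ * ‖ψ‖ := by
    intro b
    have hinj : Function.Injective (fun i : ℕ => b + (i : ℤ) * p) := by
      intro i j hij
      have hp' : (p : ℤ) ≠ 0 := by exact_mod_cast hp.ne'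
      have : (i : ℤ) * p = j * p := by simpa using hij
      exact_mod_cast mul_right_cancel₀ hp' this
    have ht := ((hasSum_sq ψ).summable.comp_injective hinj).tendsto_atTop_zero
    have hpos : 0 < (θ * ‖ψ‖) ^ 2 := by positivity
    filter_upwards [ht.eventually (gt_mem_nhds hpos)] with i hi
    exact abs_le_of_sq_le_sq hi.le (by positivity)
  obtain ⟨i, hi0, hi1⟩ := ((hdecay 0).and (hdecay 1)).exists
  set φ := shiftOp (i * p) ψ with hφ
  have hφn : ‖φ‖ = ‖ψ‖ := (shiftOp _).norm_map ψ
  have hφsmall : ‖schrOp W E φ‖ ≤ δ * θ * ‖ψ‖ := by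
    have h0 : schrOp (translatePot (i * p) W) E φ = 0 := by
      rw [hφ, schrOp_translate, hψker, map_zero]
    have e : schrOp W E φ = mulOp (W - translatePot (i * p) W) φ := by
      rw [← sub_zero (schrOp W E φ), ← h0]
      ext n
      simp only [schrOp_apply, lp.coeFn_sub, Pi.sub_apply, mulOp_apply,
        BoundedContinuousFunction.coe_sub]
      ring
    rw [e, ← hφn]
    refine (norm_mulOp_le _ _).trans ?_
    gcongr
    refine (BoundedContinuousFunction.norm_le (by positivity)).2 fun n => ?_
    rw [BoundedContinuousFunction.coe_sub, Pi.sub_apply, translatePot_apply, Real.norm_eq_abs,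
      abs_sub_comm]
    exact hap i n
  obtain ⟨w, hw, v, hv, hwv⟩ := (schrOp W E).ker.exists_add_mem_mem_orthogonal φ
  have hwker : schrOp W E w = 0 := hw
  have hvsmall : ‖v‖ ≤ θ * ‖ψ‖ := by
    have h1 := hlow v hv
    rw [hwv, map_add, hwker, zero_add] at hφsmall
    have : δ * ‖v‖ ≤ δ * (θ * ‖ψ‖) := by linarith
    exact le_of_mul_le_mul_left this hδ
  have hwval : ∀ n : ℤ, |ψ (n + i * p)| ≤ θ * ‖ψ‖ → |w n| ≤ 2 * θ * ‖ψ‖ := by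
    intro n hn
    have h1 : w n = φ n - v n := by rw [hwv]; simp
    have h2 := abs_apply_le_norm v n
    have h3 : φ n = ψ (n + i * p) := rfl
    rw [h1, h3]
    have := abs_sub (ψ (n + i * p)) (v n)
    linarith
  have hwn := hKw w hw _ (hwval 0 hi0) (hwval 1 hi1)
  have hge : ‖ψ‖ ≤ ‖w‖ + ‖v‖ := by rw [← hφn, hwv]; exact norm_add_le _ _
  have hθeq : θ * (2 * K + 2) = 1 := by rw [hθ]; field_simp
  nlinarith

/-! ### Barriers and boxes -/

/-- The indicator function of a set of integers. -/
def ind (A : Set ℤ) : ℤ →ᵇ ℝ :=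
  BoundedContinuousFunction.ofNormedAddCommGroupDiscrete (A.indicator 1) 1 (fun n => by
    by_cases h : n ∈ A <;> simp [h])

theorem ind_of_mem {A : Set ℤ} {n : ℤ} (h : n ∈ A) : ind A n = 1 := by
  change A.indicator 1 n = 1
  simp [h]

theorem ind_of_notMem {A : Set ℤ} {n : ℤ} (h : n ∉ A) : ind A n = 0 := by
  change A.indicator 1 n = 0
  simp [h]

theorem norm_mulOp_le_of_abs_le_one {w : ℤ →ᵇ ℝ} (hw : ∀ n, |w n| ≤ 1) (f : Ell2) :
    ‖mulOp w f‖ ≤ ‖f‖ := by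
  refine norm_le_of_abs_le fun n => ?_
  rw [mulOp_apply, abs_mul]
  exact mul_le_of_le_one_left (abs_nonneg _) (hw n)

theorem abs_ind_le (A : Set ℤ) (n : ℤ) : |ind A n| ≤ 1 := by
  by_cases h : n ∈ A
  · rw [ind_of_mem h, abs_one]
  · rw [ind_of_notMem h, abs_zero]; exact zero_le_one

theorem norm_mulOp_ind_sq_add {B C : Set ℤ} (h : B ⊆ C) (u : Ell2) :
    ‖mulOp (ind C) u‖ ^ 2 = ‖mulOp (ind B) u‖ ^ 2 + ‖mulOp (ind (C \ B)) u‖ ^ 2 := by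
  refine (hasSum_sq _).unique ?_
  convert (hasSum_sq (mulOp (ind B) u)).add (hasSum_sq (mulOp (ind (C \ B)) u)) using 1
  funext n
  simp only [mulOp_apply]
  by_cases hB : n ∈ B
  · rw [ind_of_mem hB, ind_of_mem (h hB), ind_of_notMem (fun h' => h'.2 hB)]; ring
  · by_cases hC : n ∈ C
    · rw [ind_of_notMem hB, ind_of_mem hC, ind_of_mem (show n ∈ C \ B from ⟨hC, hB⟩)]; ring
    · rw [ind_of_notMem hB, ind_of_notMem hC, ind_of_notMem (fun h' => hC h'.1)]; ring

/-- Truncation to a set `A` costs only the values of `u` near the boundary of `A`. -/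
theorem norm_schrOp_truncate_le (V : ℤ →ᵇ ℝ) (E : ℝ) (A D : Set ℤ)
    (hAD : ∀ n, ¬ (n ∈ A ↔ n + 1 ∈ A) → n ∈ D ∧ n + 1 ∈ D) (u : Ell2) :
    ‖schrOp V E (mulOp (ind A) u)‖ ≤ ‖schrOp V E u‖ + 2 * ‖mulOp (ind D) u‖ := by
  have hcoef : ∀ a n, |(translatePot a (ind A) - ind A) n| ≤ 1 := by
    intro a n
    rw [BoundedContinuousFunction.coe_sub, Pi.sub_apply, translatePot_apply]
    by_cases h1 : n + a ∈ A <;> by_cases h2 : n ∈ A <;>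
      simp [ind_of_mem, ind_of_notMem, h1, h2]
  have e : schrOp V E (mulOp (ind A) u) = mulOp (ind A) (schrOp V E u)
      + (mulOp (translatePot (-1) (ind A) - ind A) (shiftOp (-1) (mulOp (ind D) u))
        + mulOp (translatePot 1 (ind A) - ind A) (shiftOp 1 (mulOp (ind D) u))) := by
    have hL : ∀ n, (ind A (n + -1) - ind A n) * u (n + -1)
        = (ind A (n + -1) - ind A n) * (ind D (n + -1) * u (n + -1)) := by
      intro n
      by_cases hn : n + -1 ∈ A ↔ n ∈ A
      · by_cases h2 : n ∈ A
        · rw [ind_of_mem h2, ind_of_mem (hn.2 h2)]; ring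
        · rw [ind_of_notMem h2, ind_of_notMem (fun h => h2 (hn.1 h))]; ring
      · rw [ind_of_mem (hAD (n + -1) (by rwa [neg_add_cancel_right])).1]; ring
    have hR : ∀ n, (ind A (n + 1) - ind A n) * u (n + 1)
        = (ind A (n + 1) - ind A n) * (ind D (n + 1) * u (n + 1)) := by
      intro n
      by_cases hn : n ∈ A ↔ n + 1 ∈ A
      · by_cases h2 : n ∈ A
        · rw [ind_of_mem h2, ind_of_mem (hn.1 h2)]; ring
        · rw [ind_of_notMem h2, ind_of_notMem (fun h => h2 (hn.2 h))]; ring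
      · rw [ind_of_mem (hAD n hn).2]; ring
    ext n
    simp only [schrOp_apply, lp.coeFn_add, Pi.add_apply, mulOp_apply, shiftOp_apply,
      BoundedContinuousFunction.coe_sub, Pi.sub_apply, translatePot_apply]
    rw [← hL, ← hR, ← sub_eq_add_neg]
    ring
  rw [e]
  refine (norm_add_le _ _).trans (add_le_add (norm_mulOp_le_of_abs_le_one (abs_ind_le A) _) ?_)
  refine (norm_add_le _ _).trans ?_
  have h1 := norm_mulOp_le_of_abs_le_one (hcoef (-1)) (shiftOp (-1) (mulOp (ind D) u))
  have h2 := norm_mulOp_le_of_abs_le_one (hcoef 1) (shiftOp 1 (mulOp (ind D) u))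
  rw [LinearIsometry.norm_map] at h1 h2
  linarith

/-- The distance from `n` to the nearest cut of `ℤ` into the boxes `[iQ, (i+1)Q)`; it vanishes on
the first and last point of each box. -/
def cutDist (Q : ℕ) (n : ℤ) : ℤ := min (n % Q) (Q - 1 - n % Q)

theorem emod_succ_cases {Q : ℕ} (hQ : 0 < Q) (n : ℤ) :
    (n % Q = Q - 1 ∧ (n + 1) % Q = 0) ∨ (n % Q < Q - 1 ∧ (n + 1) % Q = n % Q + 1) := by
  have hQ' : (0 : ℤ) < Q := by exact_mod_cast hQ
  have h1 := Int.emod_nonneg n hQ'.ne'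
  have h2 := Int.emod_lt_of_pos n hQ'
  rcases (show n % (Q : ℤ) = Q - 1 ∨ n % (Q : ℤ) < Q - 1 by omega) with h | h
  · left
    refine ⟨h, ?_⟩
    rw [← Int.emod_add_emod, h, sub_add_cancel, Int.emod_self]
  · right
    refine ⟨h, ?_⟩
    rw [← Int.emod_add_emod, Int.emod_eq_of_lt (by omega) (by omega)]

theorem cutDist_nonneg {Q : ℕ} (hQ : 0 < Q) (n : ℤ) : 0 ≤ cutDist Q n := by
  have hQ' : (0 : ℤ) < Q := by exact_mod_cast hQ
  have h1 := Int.emod_nonneg n hQ'.ne'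
  have h2 := Int.emod_lt_of_pos n hQ'
  unfold cutDist
  omega

theorem cutDist_succ {Q : ℕ} (hQ : 0 < Q) (n : ℤ) :
    cutDist Q (n + 1) ≤ cutDist Q n + 1 ∧ cutDist Q n ≤ cutDist Q (n + 1) + 1 := by
  have hQ' : (0 : ℤ) < Q := by exact_mod_cast hQ
  have h1 := Int.emod_nonneg n hQ'.ne'
  have h2 := Int.emod_lt_of_pos n hQ'
  unfold cutDist
  rcases emod_succ_cases hQ n with ⟨h3, h4⟩ | ⟨h3, h4⟩ <;> rw [h4] <;> omega

/-- The sites whose distance to a cut is less than `r`. -/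
def nearCut (Q : ℕ) (r : ℤ) : Set ℤ := {n | cutDist Q n < r}

/-- In the barriers, where `V` agrees with a potential `U` having `E` in a gap, the mass of
`u` near the centre of the barriers is exponentially small, up to `‖(H_V - E) u‖`: the masses
`F r` within distance `r` of the centres satisfy `(1 + c) F (r - 1) ≤ F (r + 1) + G`. -/
theorem barrier_decay {V U : ℤ →ᵇ ℝ} {Q : ℕ} (hQ : 0 < Q) {R : ℕ}
    (hUV : ∀ n, cutDist Q n < R → U n = V n) {E γ : ℝ} (hγ : 0 < γ) (hU : BddBelowAt U E γ)
    {j : ℕ} (hj : 2 * j ≤ R) (u : Ell2) :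
    ‖mulOp (ind (nearCut Q 1)) u‖ ^ 2 ≤
      (1 + γ ^ 2 / 8)⁻¹ ^ j * ‖u‖ ^ 2 + 2 / γ ^ 2 * ‖schrOp V E u‖ ^ 2 := by
  set F : ℤ → ℝ := fun r => ‖mulOp (ind (nearCut Q r)) u‖ ^ 2 with hF
  set G := ‖schrOp V E u‖ ^ 2 / 4 with hG
  set c := γ ^ 2 / 8 with hc
  have hcpos : 0 < c := by positivity
  have hG0 : 0 ≤ G := by positivity
  have hstep : ∀ r : ℤ, r ≤ R → (1 + c) * F (r - 1) ≤ F (r + 1) + G := by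
    intro r hr
    have hsub1 : nearCut Q (r - 1) ⊆ nearCut Q (r + 1) := fun n hn => by
      simp only [nearCut, mem_ofPred_eq] at hn ⊢; omega
    have hsub2 : nearCut Q (r - 1) ⊆ nearCut Q r := fun n hn => by
      simp only [nearCut, mem_ofPred_eq] at hn ⊢; omega
    have hmono : F (r - 1) ≤ F r := by
      have := norm_mulOp_ind_sq_add hsub2 u
      simp only [hF]
      rw [this]
      linarith [sq_nonneg ‖mulOp (ind (nearCut Q r \ nearCut Q (r - 1))) u‖]
    have hsplit : F (r + 1) = F (r - 1) +
        ‖mulOp (ind (nearCut Q (r + 1) \ nearCut Q (r - 1))) u‖ ^ 2 :=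
      norm_mulOp_ind_sq_add hsub1 u
    have hAD : ∀ n, ¬ (n ∈ nearCut Q r ↔ n + 1 ∈ nearCut Q r) →
        n ∈ nearCut Q (r + 1) \ nearCut Q (r - 1) ∧
          n + 1 ∈ nearCut Q (r + 1) \ nearCut Q (r - 1) := by
      intro n hn
      have := cutDist_succ hQ n
      simp only [nearCut, mem_ofPred_eq, mem_sdiff] at hn ⊢
      omega
    have htr := norm_schrOp_truncate_le V E (nearCut Q r) _ hAD u
    have heq : schrOp U E (mulOp (ind (nearCut Q r)) u)
        = schrOp V E (mulOp (ind (nearCut Q r)) u) := by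
      ext n
      simp only [schrOp_apply, mulOp_apply]
      by_cases hn : n ∈ nearCut Q r
      · have : cutDist Q n < R := lt_of_lt_of_le hn hr
        rw [hUV n this]
      · rw [ind_of_notMem hn]; ring
    have hlow := hU (mulOp (ind (nearCut Q r)) u)
    rw [heq] at hlow
    set a := ‖mulOp (ind (nearCut Q r)) u‖ with ha
    set b := ‖mulOp (ind (nearCut Q (r + 1) \ nearCut Q (r - 1))) u‖ with hb
    set g := ‖schrOp V E u‖ with hg
    have hFr : F r = a ^ 2 := rfl
    have h1 : (γ * a) ^ 2 ≤ (g + 2 * b) ^ 2 := by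
      have : 0 ≤ γ * a := by positivity
      gcongr
      exact hlow.trans htr
    have h2 : c * F r ≤ G + b ^ 2 := by
      rw [hFr, hc, hG]
      nlinarith [sq_nonneg (g - 2 * b)]
    nlinarith
  have hiter : ∀ i : ℕ, 2 * i ≤ R → (1 + c) ^ i * (F 1 - G / c) ≤ F (2 * i + 1) - G / c := by
    intro i
    induction i with
    | zero => intro _; simp
    | succ i ih =>
      intro hi
      have h1 := ih (by omega)
      have h2 := hstep (2 * i + 2) (by omega)
      rw [show (2 * (i : ℤ) + 2 - 1) = 2 * i + 1 by ring,
        show (2 * (i : ℤ) + 2 + 1) = 2 * ((i + 1 : ℕ) : ℤ) + 1 by push_cast; ring] at h2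
      have h3 : (1 + c) * (G / c) = G / c + G := by field_simp
      rw [pow_succ, mul_assoc, mul_left_comm]
      nlinarith
  have hfin := hiter j hj
  have hFu : F (2 * j + 1) ≤ ‖u‖ ^ 2 := by
    have := norm_mulOp_le_of_abs_le_one (abs_ind_le (nearCut Q (2 * j + 1))) u
    simp only [hF]
    gcongr
  have hGc : G / c = 2 / γ ^ 2 * ‖schrOp V E u‖ ^ 2 := by
    rw [hG, hc]; field_simp; ring
  have hGc0 : 0 ≤ G / c := by positivity
  change F 1 ≤ _
  rw [← hGc, inv_pow, inv_mul_eq_div, ← sub_le_iff_le_add, le_div_iff₀ (by positivity)]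
  linarith

/-- The restriction of `H_V` to the box `[0, Q)` with Dirichlet boundary conditions. -/
def boxMatrix (V : ℤ → ℝ) (Q : ℕ) : Matrix (Fin Q) (Fin Q) ℝ := fun a b =>
  (if (b : ℕ) + 1 = a then 1 else 0) + (if (a : ℕ) + 1 = b then 1 else 0)
    + if a = b then V (a : ℕ) else 0

theorem boxMatrix_isSymmetric (V : ℤ → ℝ) (Q : ℕ) :
    (Matrix.toEuclideanLin (boxMatrix V Q)).IsSymmetric := by
  rw [Matrix.isSymmetric_toEuclideanLin_iff]
  ext a b
  simp only [Matrix.conjTranspose_apply, boxMatrix, star_trivial]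
  by_cases h : a = b
  · subst h; simp
  · rw [if_neg h, if_neg (Ne.symm h)]; ring

/-- The eigenvalues of the box restriction of `H_V`. -/
def boxEig (V : ℤ → ℝ) (Q : ℕ) : Fin Q → ℝ :=
  (boxMatrix_isSymmetric V Q).eigenvalues finrank_euclideanSpace_fin

theorem box_bddBelow (V : ℤ → ℝ) (Q : ℕ) {E τ : ℝ} (hτ : 0 ≤ τ) (h : ∀ i, τ ≤ |boxEig V Q i - E|)
    (v : EuclideanSpace ℝ (Fin Q)) :
    τ ^ 2 * ‖v‖ ^ 2 ≤ ‖Matrix.toEuclideanLin (boxMatrix V Q) v - E • v‖ ^ 2 := by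
  set b := (boxMatrix_isSymmetric V Q).eigenvectorBasis finrank_euclideanSpace_fin with hb
  rw [← b.repr.norm_map v, ← b.repr.norm_map (_ - _), EuclideanSpace.norm_sq_eq,
    EuclideanSpace.norm_sq_eq, Finset.mul_sum]
  refine Finset.sum_le_sum fun i _ => ?_
  have e : b.repr (Matrix.toEuclideanLin (boxMatrix V Q) v - E • v) i
      = (boxEig V Q i - E) * b.repr v i := by
    rw [map_sub, map_smul, PiLp.sub_apply, PiLp.smul_apply, hb,
      LinearMap.IsSymmetric.eigenvectorBasis_apply_self_apply]
    simp only [boxEig, smul_eq_mul, RCLike.ofReal_real_eq_id, id]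
    ring
  rw [e, norm_mul, mul_pow, Real.norm_eq_abs (_ - _)]
  have := h i
  gcongr

/-- The value at `a` of the box operator applied to the restriction of a sequence `w`. -/
theorem boxMatrix_mulVec (V : ℤ → ℝ) (Q : ℕ) (w : ℤ → ℝ) (a : Fin Q) :
    Matrix.toEuclideanLin (boxMatrix V Q) (WithLp.toLp 2 fun b : Fin Q => w (b : ℕ)) a
      = (if (a : ℤ) = 0 then 0 else w ((a : ℤ) - 1))
        + (if (a : ℤ) = Q - 1 then 0 else w ((a : ℤ) + 1)) + V (a : ℕ) * w (a : ℕ) := by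
  rw [Matrix.ofLp_toEuclideanLin_apply]
  simp only [Matrix.mulVec, dotProduct, boxMatrix, add_mul, Finset.sum_add_distrib, ite_mul,
    one_mul, zero_mul]
  congr 1
  · congr 1
    · split_ifs with h
      · refine Finset.sum_eq_zero fun b _ => if_neg (by omega)
      · have ha := a.2
        rw [Finset.sum_eq_single ⟨(a : ℕ) - 1, by omega⟩]
        · rw [if_pos (by simp only; omega)]
          congr 1
          simp only
          omega
        · intro b _ hb
          refine if_neg fun h' => hb ?_
          ext; simp only; omega
        · simp
    · split_ifs with h
      · refine Finset.sum_eq_zero fun b _ => if_neg ?_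
        have := b.2
        omega
      · have ha := a.2
        rw [Finset.sum_eq_single ⟨(a : ℕ) + 1, by omega⟩]
        · rw [if_pos rfl]
          congr 1
        · intro b _ hb
          refine if_neg fun h' => hb ?_
          ext; simp only; omega
        · simp
  · rw [Finset.sum_ite_eq]
    simp

/-- Summation over `ℤ` box by box. -/
theorem hasSum_boxes {Q : ℕ} (hQ : 0 < Q) (f : Ell2) :
    HasSum (fun i : ℤ => ∑ a : Fin Q, f (i * Q + (a : ℕ)) ^ 2) (‖f‖ ^ 2) := by
  have : NeZero Q := ⟨hQ.ne'⟩
  have h := (Int.divModEquiv Q).symm.hasSum_iff (f := fun n => f n ^ 2) |>.2 (hasSum_sq f)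
  refine HasSum.prod_fiberwise h fun i => ?_
  convert hasSum_fintype _ using 1
  refine Finset.sum_congr rfl fun a _ => ?_
  simp [Int.divModEquiv_symm_apply]

/-- Cutting `ℤ` into boxes costs only the values of `u` next to the cuts, so if `E` is not close to
a box eigenvalue, `u` is controlled by these values and by `(H_V - E) u`. -/
theorem boxes_bddBelow {V : ℤ →ᵇ ℝ} {Q : ℕ} (hQ : 0 < Q) (hV : ∀ i n : ℤ, V (i * Q + n) = V n)
    {E τ : ℝ} (hτ : 0 ≤ τ) (h : ∀ i, τ ≤ |boxEig V Q i - E|) (u : Ell2) :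
    τ * ‖u‖ ≤ ‖schrOp V E u‖ + 2 * ‖mulOp (ind (nearCut Q 1)) u‖ := by
  have hQ' : (0 : ℤ) < Q := by exact_mod_cast hQ
  set d : Ell2 := schrOp V E u
    - (mulOp (ind {n | n % (Q : ℤ) = 0}) (shiftOp (-1) (mulOp (ind (nearCut Q 1)) u))
      + mulOp (ind {n | n % (Q : ℤ) = Q - 1}) (shiftOp 1 (mulOp (ind (nearCut Q 1)) u))) with hd
  have hdn : ‖d‖ ≤ ‖schrOp V E u‖ + 2 * ‖mulOp (ind (nearCut Q 1)) u‖ := by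
    refine (norm_sub_le _ _).trans (add_le_add le_rfl ((norm_add_le _ _).trans ?_))
    have h1 := norm_mulOp_le_of_abs_le_one (abs_ind_le {n | n % (Q : ℤ) = 0})
      (shiftOp (-1) (mulOp (ind (nearCut Q 1)) u))
    have h2 := norm_mulOp_le_of_abs_le_one (abs_ind_le {n | n % (Q : ℤ) = Q - 1})
      (shiftOp 1 (mulOp (ind (nearCut Q 1)) u))
    rw [LinearIsometry.norm_map] at h1 h2
    linarith
  have hdval : ∀ n, d n = (if n % (Q : ℤ) = 0 then 0 else u (n - 1))
      + (if n % (Q : ℤ) = Q - 1 then 0 else u (n + 1)) + (V n - E) * u n := by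
    intro n
    have e : d n = u (n - 1) + u (n + 1) + (V n - E) * u n
        - (ind {n | n % (Q : ℤ) = 0} n * (ind (nearCut Q 1) (n + -1) * u (n + -1))
          + ind {n | n % (Q : ℤ) = Q - 1} n * (ind (nearCut Q 1) (n + 1) * u (n + 1))) := by
      rw [← schrOp_apply]; rfl
    have hL : ind {n | n % (Q : ℤ) = 0} n * (ind (nearCut Q 1) (n + -1) * u (n + -1))
        = if n % (Q : ℤ) = 0 then u (n - 1) else 0 := by
      split_ifs with h0
      · have hm : n + -1 ∈ nearCut Q 1 := by
          have := emod_succ_cases hQ (n + -1)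
          rw [neg_add_cancel_right, h0] at this
          have h1 := Int.emod_nonneg (n + -1) hQ'.ne'
          simp only [nearCut, cutDist, mem_ofPred_eq]
          omega
        rw [ind_of_mem (show n ∈ {n : ℤ | n % (Q : ℤ) = 0} from h0), ind_of_mem hm,
          ← sub_eq_add_neg]
        ring
      · rw [ind_of_notMem (show n ∉ {n : ℤ | n % (Q : ℤ) = 0} from h0)]; ring
    have hR : ind {n | n % (Q : ℤ) = Q - 1} n * (ind (nearCut Q 1) (n + 1) * u (n + 1))
        = if n % (Q : ℤ) = Q - 1 then u (n + 1) else 0 := by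
      split_ifs with h0
      · have hm : n + 1 ∈ nearCut Q 1 := by
          have := emod_succ_cases hQ n
          simp only [nearCut, cutDist, mem_ofPred_eq]
          omega
        rw [ind_of_mem (show n ∈ {n : ℤ | n % (Q : ℤ) = Q - 1} from h0), ind_of_mem hm]
        ring
      · rw [ind_of_notMem (show n ∉ {n : ℤ | n % (Q : ℤ) = Q - 1} from h0)]; ring
    rw [e, hL, hR]
    split_ifs <;> ring
  have hsq : τ ^ 2 * ‖u‖ ^ 2 ≤ ‖d‖ ^ 2 := by
    refine hasSum_le (fun i => ?_) ((hasSum_boxes hQ u).mul_left (τ ^ 2)) (hasSum_boxes hQ d)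
    have hb := box_bddBelow V Q hτ h (WithLp.toLp 2 fun b : Fin Q => u (i * Q + (b : ℕ)))
    rw [EuclideanSpace.norm_sq_eq, EuclideanSpace.norm_sq_eq] at hb
    simp only [Real.norm_eq_abs, sq_abs] at hb
    refine hb.trans (le_of_eq (Finset.sum_congr rfl fun a _ => ?_))
    congr 1
    rw [PiLp.sub_apply, PiLp.smul_apply,
      boxMatrix_mulVec V Q (fun n => u (i * Q + n)) a, hdval]
    have hmod : (i * (Q : ℤ) + (a : ℕ)) % (Q : ℤ) = (a : ℕ) := by
      rw [add_comm, Int.add_mul_emod_self_right, Int.emod_eq_of_lt (by omega)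
        (by exact_mod_cast a.2)]
    rw [hmod, hV, ← add_sub_assoc, ← add_assoc]
    simp only [smul_eq_mul]
    ring
  rw [← mul_pow] at hsq
  exact (abs_le_of_sq_le_sq' hsq (norm_nonneg _)).2.trans hdn

/-- The base of the exponential decay across barriers on which `H - E` is bounded below by `γ`. -/
def decayRate (γ : ℝ) : ℝ := (1 + γ ^ 2 / 8)⁻¹

theorem decayRate_pos (γ : ℝ) : 0 < decayRate γ := by unfold decayRate; positivity

theorem decayRate_lt_one {γ : ℝ} (hγ : 0 < γ) : decayRate γ < 1 := by
  unfold decayRate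
  exact inv_lt_one_of_one_lt₀ (by linarith [show 0 < γ ^ 2 / 8 by positivity])

/-- If `V` is `Q`-periodic and agrees near the cuts with a potential `U` for which `E` is in a gap,
then `E` can only be in the spectrum of `H_V` if it is exponentially close to an eigenvalue of the
box restriction: functions cannot tunnel through the barriers of length `R` around the cuts. -/
theorem bddBelowAt_of_barriers {V U : ℤ →ᵇ ℝ} {Q : ℕ} (hQ : 0 < Q)
    (hV : ∀ i n : ℤ, V (i * Q + n) = V n) {N R : ℕ} (hR : 4 * N ≤ R)
    (hUV : ∀ n, cutDist Q n < R → U n = V n) {E γ : ℝ} (hγ : 0 < γ) (hU : BddBelowAt U E γ)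
    (h : ∀ i, 4 * decayRate γ ^ N ≤ |boxEig V Q i - E|) :
    BddBelowAt V E √(8 * decayRate γ ^ (2 * N) / (2 + 16 / γ ^ 2)) := by
  intro u
  have h1 := boxes_bddBelow hQ hV (by have := decayRate_pos γ; positivity) h u
  have h2 := barrier_decay hQ hUV hγ hU (j := 2 * N) (by omega) u
  change _ ≤ decayRate γ ^ (2 * N) * _ + _ at h2
  set x := decayRate γ with hx
  have hx0 : 0 < x := decayRate_pos γ
  set g := ‖schrOp V E u‖
  set a := ‖mulOp (ind (nearCut Q 1)) u‖
  have h3 : (4 * x ^ N * ‖u‖) ^ 2 ≤ (g + 2 * a) ^ 2 := by gcongr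
  have h4 : 16 * (x ^ (2 * N) * ‖u‖ ^ 2) ≤ 2 * g ^ 2 + 8 * a ^ 2 := by
    have : (4 * x ^ N * ‖u‖) ^ 2 = 16 * (x ^ (2 * N) * ‖u‖ ^ 2) := by ring
    nlinarith [sq_nonneg (g - 2 * a)]
  have h5 : 8 * x ^ (2 * N) * ‖u‖ ^ 2 ≤ (2 + 16 / γ ^ 2) * g ^ 2 := by
    have : 8 * (2 / γ ^ 2 * g ^ 2) = 16 / γ ^ 2 * g ^ 2 := by ring
    linarith
  have hD : 0 < 2 + 16 / γ ^ 2 := by positivity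
  refine (abs_le_of_sq_le_sq' ?_ (norm_nonneg _)).2
  rw [mul_pow, Real.sq_sqrt (by positivity), div_mul_eq_mul_div, div_le_iff₀ hD]
  linarith

/-! ### Potentials over an alphabet of blocks -/

theorem agg_congr {k : ℕ} {x y : ℤ → Fin k → ℝ} {n : ℤ} (h : x (n / k) = y (n / k)) :
    agg k x n = agg k y n := by
  unfold agg
  split_ifs
  · rw [Int.fdiv_eq_ediv_of_nonneg _ (by omega), h]
  · rfl

theorem agg_add_mul {k : ℕ} (x : ℤ → Fin k → ℝ) (n i : ℤ) :
    agg k x (n + i * k) = agg k (fun j => x (j + i)) n := by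
  unfold agg
  split_ifs with hk
  · have hk' : (k : ℤ) ≠ 0 := by omega
    simp only [Int.fdiv_eq_ediv_of_nonneg _ (show (0 : ℤ) ≤ k by omega),
      Int.add_mul_ediv_right _ _ hk', Int.add_mul_emod_self_right]
  · rfl

theorem agg_smul {k : ℕ} (c : ℝ) (x : ℤ → Fin k → ℝ) (n : ℤ) :
    agg k (fun j => c • x j) n = c * agg k x n := by
  unfold agg
  split_ifs
  · rfl
  · simp

theorem abs_agg_sub_le {k : ℕ} (x y : ℤ → Fin k → ℝ) (n : ℤ) :
    |agg k x n - agg k y n| ≤ dist (x (n / k)) (y (n / k)) := by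
  unfold agg
  split_ifs
  · rw [Int.fdiv_eq_ediv_of_nonneg _ (by omega), ← Real.dist_eq]
    exact dist_le_pi_dist _ _ _
  · simp

theorem abs_agg_le {k : ℕ} (x : ℤ → Fin k → ℝ) (n : ℤ) : |agg k x n| ≤ ‖x (n / k)‖ := by
  have h := abs_agg_sub_le x 0 n
  have h0 : agg k 0 n = 0 := by unfold agg; split_ifs <;> rfl
  rwa [h0, sub_zero, Pi.zero_apply, dist_zero_right] at h

/-- The bounded potential `lam · y^♮`. -/
def pot (k : ℕ) (lam : ℝ) (y : ℤ →ᵇ (Fin k → ℝ)) : ℤ →ᵇ ℝ :=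
  ofNormedAddCommGroupDiscrete (fun n => lam * agg k y n) (|lam| * ‖y‖) fun n => by
    rw [norm_mul, Real.norm_eq_abs, Real.norm_eq_abs]
    gcongr
    exact (abs_agg_le _ _).trans (y.norm_coe_le_norm _)

theorem coe_pot (k : ℕ) (lam : ℝ) (y : ℤ →ᵇ (Fin k → ℝ)) :
    ⇑(pot k lam y) = fun n => lam * agg k y n := rfl

theorem norm_pot_le (k : ℕ) (lam : ℝ) (y : ℤ →ᵇ (Fin k → ℝ)) : ‖pot k lam y‖ ≤ |lam| * ‖y‖ := by
  refine (BoundedContinuousFunction.norm_le (by positivity)).2 fun n => ?_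
  rw [coe_pot, norm_mul, Real.norm_eq_abs, Real.norm_eq_abs]
  gcongr
  exact (abs_agg_le _ _).trans (y.norm_coe_le_norm _)

theorem norm_pot_sub_le (k : ℕ) (a b : ℝ) (y z : ℤ →ᵇ (Fin k → ℝ)) :
    ‖pot k a y - pot k b z‖ ≤ |a - b| * ‖y‖ + |b| * dist y z := by
  refine (BoundedContinuousFunction.norm_le (by positivity)).2 fun n => ?_
  rw [BoundedContinuousFunction.coe_sub, Pi.sub_apply, coe_pot, coe_pot, Real.norm_eq_abs,
    show a * agg k y n - b * agg k z n = (a - b) * agg k y n + b * (agg k y n - agg k z n) by ring]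
  refine (abs_add_le _ _).trans ?_
  rw [abs_mul, abs_mul]
  gcongr
  · exact (abs_agg_le _ _).trans (y.norm_coe_le_norm _)
  · exact (abs_agg_sub_le _ _ _).trans (dist_coe_le_dist _)

/-- A sequence uniformly close to a bounded one is bounded. -/
theorem exists_coe_eq_of_dist_le {k : ℕ} (X : ℤ →ᵇ (Fin k → ℝ)) (f : ℤ → Fin k → ℝ) {ε : ℝ}
    (hε : 0 ≤ ε) (h : ∀ n, dist (f n) (X n) ≤ ε) :
    ∃ P : ℤ →ᵇ (Fin k → ℝ), ⇑P = f ∧ dist P X ≤ ε := by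
  refine ⟨ofNormedAddCommGroupDiscrete f (ε + ‖X‖) fun n => ?_, rfl,
    (BoundedContinuousFunction.dist_le hε).2 h⟩
  have h1 := h n
  have h2 := X.norm_coe_le_norm n
  rw [dist_eq_norm] at h1
  calc ‖f n‖ = ‖(f n - X n) + X n‖ := by rw [sub_add_cancel]
    _ ≤ ‖f n - X n‖ + ‖X n‖ := norm_add_le _ _
    _ ≤ ε + ‖X‖ := add_le_add h1 h2

theorem apply_add_mul_of_periodic {α : Type*} {f : ℤ → α} {q : ℕ} (h : ∀ n, f (n + q) = f n)
    (n i : ℤ) : f (n + i * q) = f n :=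
  (Function.Periodic.int_mul (f := f) (c := (q : ℤ)) h i) n

/-- The potentials of limit-periodic sequences return uniformly. -/
theorem pot_return {k : ℕ} (hk : 0 < k) {Y : Set (Fin k → ℝ)} (lam : ℝ) {y : ℤ →ᵇ (Fin k → ℝ)}
    (hy : y ∈ LPY k Y) {ε : ℝ} (hε : 0 < ε) :
    ∃ p : ℕ, 0 < p ∧ ∀ i : ℕ, ∀ n : ℤ, |pot k lam y (n + i * p) - pot k lam y n| ≤ ε := by
  obtain ⟨z, ⟨⟨q, hq, hz⟩, -⟩, hyz⟩ := Metric.mem_closure_iff.1 hy (ε / (2 * (|lam| + 1)))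
    (by positivity)
  have hclose : ∀ n, |pot k lam y n - pot k lam z n| ≤ ε / 2 := by
    intro n
    have h1 := ((pot k lam y - pot k lam z).norm_coe_le_norm n).trans
      (norm_pot_sub_le k lam lam y z)
    rw [sub_self, abs_zero, zero_mul, zero_add] at h1
    refine h1.trans ?_
    calc |lam| * dist y z ≤ (|lam| + 1) * (ε / (2 * (|lam| + 1))) := by
          gcongr
          linarith
      _ = ε / 2 := by field_simp
  have hper : ∀ (i : ℕ) (n : ℤ), pot k lam z (n + i * (q * k : ℕ)) = pot k lam z n := by
    intro i n
    simp only [coe_pot]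
    rw [show n + (i : ℤ) * (q * k : ℕ) = n + (i * q : ℤ) * k by push_cast; ring, agg_add_mul]
    congr 1
    exact agg_congr (apply_add_mul_of_periodic hz _ _)
  refine ⟨q * k, by positivity, fun i n => ?_⟩
  have h1 := hclose (n + i * (q * k : ℕ))
  rw [hper] at h1
  have h2 := hclose n
  rw [abs_le] at *
  constructor <;> linarith

/-! ### Opening gaps -/

theorem perExt_mem {α : Type*} [Zero α] {m : ℕ} (hm : 0 < m) {w : Fin m → α} {A : Set α}
    (h : ∀ i, w i ∈ A) (n : ℤ) : perExt w n ∈ A := by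
  unfold perExt
  rw [dif_pos hm]
  exact h _

theorem perExt_add {α : Type*} [Zero α] {m : ℕ} (w : Fin m → α) (n : ℤ) :
    perExt w (n + m) = perExt w n := by
  unfold perExt
  simp only [Int.add_emod_right]

/-- The periodic extension of one period of a periodic sequence. -/
theorem perExt_restrict {α : Type*} [Zero α] {m : ℕ} (hm : 0 < m) {f : ℤ → α}
    (h : ∀ n, f (n + m) = f n) (n : ℤ) : perExt (fun i : Fin m => f (i : ℕ)) n = f n := by
  unfold perExt
  rw [dif_pos hm]
  have h0 : 0 ≤ n % (m : ℤ) := Int.emod_nonneg n (by omega)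
  simp only [Int.toNat_of_nonneg h0]
  have := apply_add_mul_of_periodic h (n % m) (n / m)
  rwa [mul_comm, Int.emod_add_mul_ediv, eq_comm] at this

/-- Gap-richness of `lam Y` in terms of periodic sequences over `Y`. -/
theorem exists_gap {k : ℕ} {Y : Set (Fin k → ℝ)} {S : Set ℝ} {lam : ℝ} (hlam : lam ≠ 0)
    (hGR : GapRich k ((fun w => lam • w) '' Y) S) {X : ℤ →ᵇ (Fin k → ℝ)} (hX : X ∈ PerY k Y)
    {E : ℝ} (hE : E ∉ S) {ε : ℝ} (hε : 0 < ε) :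
    ∃ P ∈ PerY k Y, dist P X ≤ ε ∧ ∃ γ > 0, BddBelowAt (pot k lam P) E γ := by
  obtain ⟨⟨q, hq, hXq⟩, hXY⟩ := hX
  obtain ⟨l, hl, y, hyY, hdist, hgap⟩ := hGR.2 E hE q hq (fun i => lam • X (i : ℕ))
    (fun i => ⟨_, hXY _, rfl⟩) (|lam| * ε) (by positivity)
  have hx : ∀ n, perExt (fun i : Fin q => lam • X (i : ℕ)) n = lam • X n :=
    perExt_restrict hq (f := fun n => lam • X n) fun n => by simp only [hXq]
  obtain ⟨P, hP, hPX⟩ := exists_coe_eq_of_dist_le X (fun n => lam⁻¹ • perExt y n) hε.le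
    (fun n => by
      have h := hdist n
      rw [hx, ← smul_inv_smul₀ hlam (perExt y n), dist_smul₀, Real.norm_eq_abs] at h
      rw [dist_comm]
      exact (lt_of_mul_lt_mul_left h (abs_nonneg _)).le)
  refine ⟨P, ⟨⟨l, hl, fun n => ?_⟩, fun n => ?_⟩, hPX, ?_⟩
  · simp only [hP, perExt_add]
  · obtain ⟨w, hw, hwy⟩ := perExt_mem hl hyY n
    simp only [hP, ← hwy, inv_smul_smul₀ hlam]
    exact hw
  · rw [← not_mem_spectrum_iff]
    have e : ⇑(pot k lam P) = agg k (perExt y) := by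
      funext n
      rw [coe_pot]
      simp only
      rw [← agg_smul, hP]
      simp only [smul_inv_smul₀ hlam]
    rwa [e]

/-- By compactness, finitely many periodic sequences open gaps of a uniform size at all energies in
a compact set avoiding `S`, for all couplings in a compact set. -/
theorem exists_gap_family {k : ℕ} {Y : Set (Fin k → ℝ)} {S K C : Set ℝ} (hK : IsCompact K)
    (hK0 : ∀ lam ∈ K, lam ≠ 0) (hGR : ∀ lam ∈ K, GapRich k ((fun w => lam • w) '' Y) S)
    (hC : IsCompact C) (hCS : ∀ E ∈ C, E ∉ S) {X : ℤ →ᵇ (Fin k → ℝ)} (hX : X ∈ PerY k Y)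
    {ε : ℝ} (hε : 0 < ε) :
    ∃ l : List (ℤ →ᵇ (Fin k → ℝ)), l ≠ [] ∧ (∀ P ∈ l, P ∈ PerY k Y ∧ dist P X ≤ ε) ∧
      ∃ γ > 0, ∀ lam ∈ K, ∀ E ∈ C, ∃ P ∈ l, BddBelowAt (pot k lam P) E γ := by
  suffices H : ∃ l : List (ℤ →ᵇ (Fin k → ℝ)), l ≠ [] ∧ (∀ P ∈ l, P ∈ PerY k Y ∧ dist P X ≤ ε) ∧
      ∃ γ > 0, ∀ t ∈ K ×ˢ C, ∃ P ∈ l, BddBelowAt (pot k t.1 P) t.2 γ by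
    obtain ⟨l, h1, h2, γ, hγ, h3⟩ := H
    exact ⟨l, h1, h2, γ, hγ, fun lam hlam E hE => h3 (lam, E) ⟨hlam, hE⟩⟩
  refine (hK.prod hC).induction_on (p := fun s : Set (ℝ × ℝ) =>
    ∃ l : List (ℤ →ᵇ (Fin k → ℝ)), l ≠ [] ∧ (∀ P ∈ l, P ∈ PerY k Y ∧ dist P X ≤ ε) ∧
      ∃ γ > 0, ∀ t ∈ s, ∃ P ∈ l, BddBelowAt (pot k t.1 P) t.2 γ) ?_ ?_ ?_ ?_
  · exact ⟨[X], by simp, by simp [hX, hε.le], 1, one_pos, by simp⟩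
  · rintro s t hst ⟨l, h1, h2, γ, hγ, h3⟩
    exact ⟨l, h1, h2, γ, hγ, fun u hu => h3 u (hst hu)⟩
  · rintro s t ⟨l, h1, h2, γ, hγ, h3⟩ ⟨l', h1', h2', γ', hγ', h3'⟩
    refine ⟨l ++ l', by simp [h1], fun P hP => ?_, min γ γ', lt_min hγ hγ', fun u hu => ?_⟩
    · exact (List.mem_append.1 hP).elim (h2 P) (h2' P)
    · rcases hu with hu | hu
      · obtain ⟨P, hP, hb⟩ := h3 u hu
        exact ⟨P, List.mem_append_left _ hP, hb.mono (min_le_left _ _)⟩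
      · obtain ⟨P, hP, hb⟩ := h3' u hu
        exact ⟨P, List.mem_append_right _ hP, hb.mono (min_le_right _ _)⟩
  · rintro ⟨a, E⟩ ⟨ha, hE⟩
    obtain ⟨P, hP, hPX, γ, hγ, hb⟩ := exists_gap (hK0 a ha) (hGR a ha) hX (hCS E hE) hε
    have hev : ∀ᶠ t : ℝ × ℝ in nhds (a, E), |a - t.1| * ‖P‖ < γ / 4 ∧ |E - t.2| < γ / 4 := by
      refine Filter.Eventually.and ?_ ?_
      · refine ContinuousAt.eventually_lt (by fun_prop) continuousAt_const ?_
        simpa using hγ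
      · refine ContinuousAt.eventually_lt (by fun_prop) continuousAt_const ?_
        simpa using hγ
    refine ⟨_, mem_nhdsWithin_of_mem_nhds hev, [P], by simp, by simp [hP, hPX], γ / 2,
      half_pos hγ, fun t ht => ⟨P, by simp, ?_⟩⟩
    obtain ⟨h1, h2⟩ := ht
    have hn := norm_pot_sub_le k a t.1 P P
    rw [dist_self, mul_zero, add_zero] at hn
    exact (hb.perturb (hn.trans h1.le) h2.le).mono (by linarith)

theorem exists_common_period {k : ℕ} {Y : Set (Fin k → ℝ)} (l : List (ℤ →ᵇ (Fin k → ℝ)))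
    (h : ∀ P ∈ l, P ∈ PerY k Y) : ∃ p : ℕ, 0 < p ∧ ∀ P ∈ l, ∀ n : ℤ, P (n + p) = P n := by
  induction l with
  | nil => exact ⟨1, one_pos, by simp⟩
  | cons P l ih =>
    obtain ⟨p, hp, hl⟩ := ih fun P hP => h P (List.mem_cons_of_mem _ hP)
    obtain ⟨⟨q, hq, hPq⟩, -⟩ := h P List.mem_cons_self
    refine ⟨p * q, by positivity, fun P' hP' n => ?_⟩
    rcases List.mem_cons.1 hP' with rfl | hP'
    · have := apply_add_mul_of_periodic hPq n p
      push_cast; exact this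
    · have := apply_add_mul_of_periodic (hl P' hP') n q
      push_cast; rwa [mul_comm (p : ℤ)]

/-- Concatenating long stretches of the periodic sequences in `l`. Each member of `l` occupies one
stretch of each period, and `c` is the middle of this stretch, so that the cuts into boxes of
length `Q`, translated by `c`, lie in the middle of the stretches of the given member. -/
theorem exists_concat {k : ℕ} (hk : 0 < k) {Y : Set (Fin k → ℝ)} {X : ℤ →ᵇ (Fin k → ℝ)} {ε : ℝ}
    (hε : 0 ≤ ε) {l : List (ℤ →ᵇ (Fin k → ℝ))} (hl : l ≠ [])
    (hlY : ∀ P ∈ l, P ∈ PerY k Y ∧ dist P X ≤ ε) {p : ℕ} (hp : 0 < p)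
    (hper : ∀ P ∈ l, ∀ n : ℤ, P (n + p) = P n) {N : ℕ} (hN : 0 < N) {Q : ℕ}
    (hQ : Q = l.length * (8 * k * N * p)) :
    ∃ y ∈ PerY k Y, dist y X ≤ ε ∧ (∀ i n : ℤ, agg k y (i * Q + n) = agg k y n) ∧
      ∀ j : Fin l.length, ∃ c : ℤ, ∀ n, cutDist Q n < (4 * k * N * p : ℕ) →
        agg k (l.get j) (n + c) = agg k y (n + c) := by
  set m := l.length with hm
  have hm0 : 0 < m := List.length_pos_iff.2 hl
  have hm0' : (0 : ℤ) < m := by exact_mod_cast hm0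
  set L : ℕ := 8 * N * p with hL
  have hL0 : 0 < L := by positivity
  have hL0' : (0 : ℤ) < L := by exact_mod_cast hL0
  have hidx : ∀ i : ℤ, (i % m).toNat < m := fun i => by
    have h1 := Int.emod_nonneg i hm0'.ne'
    have h2 := Int.emod_lt_of_pos i hm0'
    omega
  let s : ℤ → Fin m := fun i => ⟨(i % m).toNat, hidx i⟩
  have hs : ∀ i t : ℤ, s (i + t * m) = s i := fun i t => by
    simp only [s, Int.add_mul_emod_self_right]
  have hs' : ∀ j : Fin m, s (j : ℕ) = j := fun j => by
    ext
    simp only [s]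
    rw [Int.emod_eq_of_lt (by omega) (by exact_mod_cast j.2)]
    simp
  obtain ⟨y, hy, hyX⟩ := exists_coe_eq_of_dist_le X (fun n => l.get (s (n / L)) n) hε
    fun n => (dist_coe_le_dist n).trans (hlY _ (List.get_mem _ _)).2
  have hyper : ∀ n i : ℤ, y (n + i * (m * L : ℕ)) = y n := by
    intro n i
    simp only [hy]
    rw [show n + i * (m * L : ℕ) = n + (i * m) * L by push_cast; ring,
      Int.add_mul_ediv_right _ _ hL0'.ne', hs,
      show n + i * m * (L : ℤ) = n + (i * m * 8 * N) * p by rw [hL]; push_cast; ring]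
    exact apply_add_mul_of_periodic (hper _ (List.get_mem _ _)) _ _
  have hyY : y ∈ PerY k Y := by
    refine ⟨⟨m * L, by positivity, fun n => ?_⟩, fun n => ?_⟩
    · have := hyper n 1
      rwa [one_mul] at this
    · rw [hy]; exact (hlY _ (List.get_mem _ _)).1.2 n
  refine ⟨y, hyY, hyX, fun i n => ?_, fun j => ?_⟩
  · rw [show i * (Q : ℤ) + n = n + (i * (m * L : ℕ)) * k by rw [hQ, hL]; push_cast; ring,
      agg_add_mul]
    exact agg_congr (hyper _ _)
  · refine ⟨(j : ℕ) * (k * L : ℕ) + (4 * k * N * p : ℕ), fun n hn => agg_congr ?_⟩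
    set n' := n + ((j : ℕ) * (k * L : ℕ) + (4 * k * N * p : ℕ)) with hn'
    -- The stretch containing `n'` has index `j` modulo `m`.
    have hst : ∃ t : ℤ, n' / (k * L : ℕ) = (j : ℕ) + t * m := by
      set h : ℤ := ((4 * k * N * p : ℕ) : ℤ) with hh
      have hkL : ((k * L : ℕ) : ℤ) = 2 * h := by rw [hL, hh]; push_cast; ring
      have hQh : (Q : ℤ) = m * (2 * h) := by rw [hQ, hh]; push_cast; ring
      have hh0 : 0 < h := by rw [hh]; exact_mod_cast (by positivity)
      have hQ0 : (0 : ℤ) < Q := by rw [hQh]; positivity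
      have h1 := Int.emod_nonneg n hQ0.ne'
      have h2 := Int.emod_lt_of_pos n hQ0
      have h3 := Int.emod_add_mul_ediv n Q
      simp only [cutDist] at hn
      rcases min_lt_iff.1 hn with hr | hr
      · refine ⟨n / Q, ?_⟩
        rw [hkL, show n' = (n % Q + h) + ((j : ℕ) + n / Q * m) * (2 * h) by
            rw [hn', hkL]; nth_rewrite 1 [← h3]; nth_rewrite 2 [hQh]; ring,
          Int.add_mul_ediv_right _ _ (by omega), Int.ediv_eq_zero_of_lt (by omega) (by omega),
          zero_add]
      · refine ⟨n / Q + 1, ?_⟩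
        rw [hkL, show n' = (n % Q - Q + h) + ((j : ℕ) + (n / Q + 1) * m) * (2 * h) by
            rw [hn', hkL]; nth_rewrite 1 [← h3]
            linear_combination (n / Q + 1) * hQh,
          Int.add_mul_ediv_right _ _ (by omega), Int.ediv_eq_zero_of_lt (by omega) (by omega),
          zero_add]
    obtain ⟨t, ht⟩ := hst
    rw [hy]
    simp only
    rw [Int.ediv_ediv_of_nonneg (by omega), ← Nat.cast_mul, ht, hs, hs']

/-- There are periodic sequences near `X` such that, for all couplings in `K`, the part of the
spectrum in `C` is within `4 * x ^ N`, where `x < 1`, of a set of at most `A * N` points. -/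
theorem exists_thin {k : ℕ} (hk : 0 < k) {Y : Set (Fin k → ℝ)} {S K C : Set ℝ} (hK : IsCompact K)
    (hK0 : ∀ lam ∈ K, lam ≠ 0) (hGR : ∀ lam ∈ K, GapRich k ((fun w => lam • w) '' Y) S)
    (hC : IsCompact C) (hCS : ∀ E ∈ C, E ∉ S) {X : ℤ →ᵇ (Fin k → ℝ)} (hX : X ∈ PerY k Y)
    {ε : ℝ} (hε : 0 < ε) :
    ∃ (A : ℕ) (x : ℝ), 0 < x ∧ x < 1 ∧ ∀ N : ℕ, 0 < N → ∃ y ∈ PerY k Y, dist y X ≤ ε ∧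
      ∃ κ > 0, ∃ (ι : Type) (_ : Fintype ι) (e : ℝ → ι → ℝ), Fintype.card ι = A * N ∧
        ∀ lam ∈ K, ∀ E ∈ C, (∀ i, 4 * x ^ N ≤ |e lam i - E|) →
          BddBelowAt (pot k lam y) E κ := by
  obtain ⟨l, hl, hlY, γ, hγ, hgap⟩ := exists_gap_family hK hK0 hGR hC hCS hX hε
  obtain ⟨p, hp, hper⟩ := exists_common_period l fun P hP => (hlY P hP).1
  refine ⟨l.length * (l.length * (8 * k * p)), decayRate γ, decayRate_pos γ, decayRate_lt_one hγ,
    fun N hN => ?_⟩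
  obtain ⟨Q, hQ⟩ : ∃ Q, Q = l.length * (8 * k * N * p) := ⟨_, rfl⟩
  have hQ0 : 0 < Q := by
    have := List.length_pos_iff.2 hl
    rw [hQ]; positivity
  obtain ⟨y, hyY, hyX, hyQ, hc⟩ := exists_concat hk hε.le hl hlY hp hper hN hQ
  choose c hc using hc
  have hx := decayRate_pos γ
  refine ⟨y, hyY, hyX, √(8 * decayRate γ ^ (2 * N) / (2 + 16 / γ ^ 2)), by positivity,
    Fin l.length × Fin Q, inferInstance,
    fun lam i => boxEig (translatePot (c i.1) (pot k lam y)) Q i.2, ?_, ?_⟩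
  · rw [Fintype.card_prod, Fintype.card_fin, Fintype.card_fin, hQ]; ring
  · intro lam hlam E hE h
    obtain ⟨P, hP, hb⟩ := hgap lam hlam E hE
    obtain ⟨j, rfl⟩ := List.get_of_mem hP
    refine BddBelowAt.of_translate (a := c j) ?_
    refine bddBelowAt_of_barriers hQ0 (U := translatePot (c j) (pot k lam (l.get j)))
      (R := 4 * k * N * p) ?_ ?_ ?_ hγ (hb.translate _) fun i => h (j, i)
    · intro i n
      simp only [translatePot_apply, coe_pot]
      rw [add_assoc, hyQ]
    · calc 4 * N = 4 * 1 * N * 1 := by ring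
        _ ≤ 4 * k * N * p := by gcongr <;> omega
    · intro n hn
      simp only [translatePot_apply, coe_pot]
      rw [hc j n hn]

/-! ### Thin covers and Hausdorff dimension -/

/-- `s` is covered by finitely many intervals whose lengths, raised to the power `α`, have sum less
than `η`. -/
def ThinCover (s : Set ℝ) (α η : ℝ) : Prop :=
  ∃ (ι : Type) (_ : Fintype ι) (x r : ι → ℝ), (∀ i, 0 ≤ r i) ∧
    s ⊆ ⋃ i, Metric.closedBall (x i) (r i) ∧ ∑ i, (2 * r i) ^ α < η

theorem dimH_eq_zero_of_thinCover {s : Set ℝ}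
    (h : ∀ n : ℕ, ThinCover s (1 / (n + 1)) (1 / (n + 1))) : dimH s = 0 := by
  choose ι inst x r hr hcov hsum using h
  have hlen : ∀ n i, 2 * r n i ≤ 1 / ((n : ℝ) + 1) := by
    intro n i
    have hn : (0 : ℝ) < (n : ℝ) + 1 := by positivity
    have h0 : 0 ≤ 2 * r n i := by have := hr n i; positivity
    have h1 : (2 * r n i) ^ (1 / ((n : ℝ) + 1)) ≤ 1 / ((n : ℝ) + 1) :=
      (Finset.single_le_sum (f := fun i => (2 * r n i) ^ (1 / ((n : ℝ) + 1)))
        (fun i _ => Real.rpow_nonneg (by have := hr n i; positivity) _)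
        (Finset.mem_univ i)).trans (hsum n).le
    have h2 : (1 : ℝ) / (n + 1) ≤ 1 := by
      rw [div_le_one hn]; linarith [Nat.cast_nonneg (α := ℝ) n]
    calc 2 * r n i = ((2 * r n i) ^ (1 / ((n : ℝ) + 1))) ^ ((n : ℝ) + 1) := by
          rw [← Real.rpow_mul h0, one_div_mul_cancel hn.ne', Real.rpow_one]
      _ ≤ (1 / ((n : ℝ) + 1)) ^ ((n : ℝ) + 1) :=
          Real.rpow_le_rpow (Real.rpow_nonneg h0 _) h1 hn.le
      _ ≤ (1 / ((n : ℝ) + 1)) ^ (1 : ℝ) :=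
          Real.rpow_le_rpow_of_exponent_ge' (by positivity) h2 zero_le_one
            (by linarith [Nat.cast_nonneg (α := ℝ) n])
      _ = 1 / ((n : ℝ) + 1) := Real.rpow_one _
  have hdiam : ∀ n i, Metric.ediam (Metric.closedBall (x n i) (r n i))
      = ENNReal.ofReal (2 * r n i) := by
    intro n i
    rw [Real.closedBall_eq_Icc, Real.ediam_Icc]
    congr 1
    ring
  refine le_antisymm (ENNReal.le_of_forall_pos_le_add fun α hα _ => ?_) zero_le
  rw [zero_add]
  refine dimH_le_of_hausdorffMeasure_ne_top (ne_top_of_le_ne_top ENNReal.one_ne_top ?_)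
  have hlim : Filter.Tendsto (fun n : ℕ => 1 / ((n : ℝ) + 1)) Filter.atTop (nhds 0) :=
    tendsto_one_div_add_atTop_nhds_zero_nat
  refine (Measure.hausdorffMeasure_le_liminf_sum (α : ℝ) s (l := Filter.atTop)
    (fun n : ℕ => ENNReal.ofReal (1 / ((n : ℝ) + 1))) ?_
    (fun n i => Metric.closedBall (x n i) (r n i)) ?_ ?_).trans ?_
  · have := ENNReal.tendsto_ofReal hlim
    rwa [ENNReal.ofReal_zero] at this
  · refine Filter.Eventually.of_forall fun n i => ?_
    rw [hdiam]
    exact ENNReal.ofReal_le_ofReal (hlen n i)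
  · exact Filter.Eventually.of_forall hcov
  · refine Filter.liminf_le_of_frequently_le' (Filter.Eventually.frequently ?_)
    filter_upwards [hlim.eventually_lt_const (show (0 : ℝ) < α from hα)] with n hn
    have hn0 : (0 : ℝ) < (n : ℝ) + 1 := by positivity
    have h2 : (1 : ℝ) / (n + 1) ≤ 1 := by
      rw [div_le_one hn0]; linarith [Nat.cast_nonneg (α := ℝ) n]
    calc ∑ i, Metric.ediam (Metric.closedBall (x n i) (r n i)) ^ (α : ℝ)
        ≤ ∑ i, ENNReal.ofReal ((2 * r n i) ^ (1 / ((n : ℝ) + 1))) := by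
          refine Finset.sum_le_sum fun i _ => ?_
          have h0 : 0 ≤ 2 * r n i := by have := hr n i; positivity
          rw [hdiam, ENNReal.ofReal_rpow_of_nonneg h0 α.coe_nonneg]
          exact ENNReal.ofReal_le_ofReal (Real.rpow_le_rpow_of_exponent_ge' h0
            ((hlen n i).trans h2) (by positivity) hn.le)
      _ = ENNReal.ofReal (∑ i, (2 * r n i) ^ (1 / ((n : ℝ) + 1))) := by
          rw [ENNReal.ofReal_sum_of_nonneg]
          exact fun i _ => Real.rpow_nonneg (by have := hr n i; positivity) _
      _ ≤ ENNReal.ofReal 1 := ENNReal.ofReal_le_ofReal ((hsum n).le.trans h2)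
      _ = 1 := ENNReal.ofReal_one

theorem finite_inter_Icc_of_isDiscreteSet {S : Set ℝ} (hS : IsDiscreteSet S) (M : ℝ) :
    (S ∩ Icc (-M) M).Finite := by
  by_contra h
  obtain ⟨x, -, hx⟩ := Set.Infinite.exists_accPt_of_subset_isCompact h
    (isCompact_Icc (a := -M) (b := M)) inter_subset_right
  exact hS x (hx.mono (Filter.principal_mono.2 inter_subset_left))

/-- Near every periodic sequence there is a ball of sequences whose spectra have thin covers,
uniformly over a compact set of couplings. -/
theorem exists_ball_thinCover {k : ℕ} (hk : 0 < k) {Y : Set (Fin k → ℝ)} {S K : Set ℝ}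
    (hS : IsDiscreteSet S) (hK : IsCompact K) (hK0 : ∀ lam ∈ K, lam ≠ 0)
    (hGR : ∀ lam ∈ K, GapRich k ((fun w => lam • w) '' Y) S) {α η : ℝ} (hα : 0 < α) (hη : 0 < η)
    {X : ℤ →ᵇ (Fin k → ℝ)} (hX : X ∈ PerY k Y) {ε : ℝ} (hε : 0 < ε) :
    ∃ y ∈ PerY k Y, dist y X ≤ ε ∧ ∃ δ > 0, ∀ z, dist z y < δ → ∀ lam ∈ K,
      ThinCover (SchrodingerSpectrum (pot k lam z)) α η := by
  obtain ⟨Λ, hΛ, hKΛ⟩ := hK.isBounded.exists_pos_norm_le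
  set M := 2 + Λ * (‖X‖ + ε + 1) with hM
  have hF := finite_inter_Icc_of_isDiscreteSet hS M
  set F := S ∩ Icc (-M) M with hFdef
  have := hF.fintype
  -- `ρ` is chosen such that `(2 * ρ) ^ α = η / (2 * (#F + 1))`.
  set ρ : ℝ := (η / (2 * (Fintype.card F + 1))) ^ α⁻¹ / 2 with hρ
  have hρ0 : 0 < ρ := by positivity
  have hρα : (2 * ρ) ^ α = η / (2 * (Fintype.card F + 1)) := by
    rw [hρ, mul_div_cancel₀ _ two_ne_zero, ← Real.rpow_mul (by positivity),
      inv_mul_cancel₀ hα.ne', Real.rpow_one]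
  set C := Icc (-M) M \ ⋃ s ∈ F, Metric.ball s ρ with hCdef
  have hC : IsCompact C :=
    isCompact_Icc.diff (isOpen_biUnion fun s _ => Metric.isOpen_ball)
  have hCS : ∀ E ∈ C, E ∉ S := fun E hE hES =>
    hE.2 (mem_biUnion (show E ∈ F from ⟨hES, hE.1⟩) (Metric.mem_ball_self hρ0))
  obtain ⟨A, x, hx0, hx1, hthin⟩ := exists_thin hk hK hK0 hGR hC hCS hX hε
  obtain ⟨N, hN, hNη⟩ : ∃ N : ℕ, 0 < N ∧ (A * N : ℝ) * (2 * (4 * x ^ N)) ^ α < η / 2 := by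
    have hlim := (tendsto_self_mul_const_pow_of_lt_one (Real.rpow_nonneg hx0.le α)
      (Real.rpow_lt_one hx0.le hx1 hα)).const_mul ((A : ℝ) * 8 ^ α)
    rw [mul_zero] at hlim
    obtain ⟨N, h1, h2⟩ := ((Filter.eventually_gt_atTop 0).and
      (hlim.eventually_lt_const (half_pos hη))).exists
    refine ⟨N, h1, lt_of_eq_of_lt ?_ h2⟩
    rw [show 2 * (4 * x ^ N) = 8 * x ^ N by ring, Real.mul_rpow (by norm_num) (by positivity),
      ← Real.rpow_natCast, ← Real.rpow_natCast, ← Real.rpow_mul hx0.le, ← Real.rpow_mul hx0.le,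
      mul_comm (N : ℝ) α]
    ring
  obtain ⟨y, hyY, hyX, κ, hκ, ι, _, e, hcard, hgap⟩ := hthin N hN
  refine ⟨y, hyY, hyX, min 1 (κ / (2 * Λ)), by positivity, fun z hz lam hlam => ?_⟩
  have hz1 : dist z y < 1 := hz.trans_le (min_le_left _ _)
  have hz2 : dist z y < κ / (2 * Λ) := hz.trans_le (min_le_right _ _)
  have hlamΛ : |lam| ≤ Λ := hKΛ lam hlam
  have hzn : ‖z‖ ≤ ‖X‖ + ε + 1 := by
    have h1 := norm_le_norm_add_norm_sub' z X
    have h2 := dist_triangle z y X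
    rw [dist_eq_norm z X] at h2
    linarith
  refine ⟨F ⊕ ι, inferInstance, Sum.elim (fun s => (s : ℝ)) (e lam),
    Sum.elim (fun _ => ρ) fun _ => 4 * x ^ N, ?_, ?_, ?_⟩
  · rintro (i | i)
    · exact hρ0.le
    · simp only [Sum.elim_inr]; positivity
  · intro E hE
    have hEM : |E| ≤ M := by
      by_contra hlt
      have h1 := norm_pot_le k lam z
      have h2 : |lam| * ‖z‖ ≤ Λ * (‖X‖ + ε + 1) := by gcongr
      exact (not_mem_spectrum_iff _ _).2 ⟨_, by push Not at hlt; linarith,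
        bddBelowAt_of_large (pot k lam z) E⟩ hE
    rw [mem_iUnion]
    by_cases hEC : E ∈ C
    · by_contra! hcon
      have hb := hgap lam hlam E hEC fun i => by
        have := hcon (Sum.inr i)
        simp only [Sum.elim_inr, Metric.mem_closedBall, not_le, Real.dist_eq] at this
        rw [abs_sub_comm]
        exact this.le
      have h1 : ‖pot k lam y - pot k lam z‖ ≤ κ / 2 := by
        refine (norm_pot_sub_le k lam lam y z).trans ?_
        rw [sub_self, abs_zero, zero_mul, zero_add, dist_comm]
        calc |lam| * dist z y ≤ Λ * (κ / (2 * Λ)) := by gcongr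
          _ = κ / 2 := by field_simp
      have h2 := hb.perturb h1 (show |E - E| ≤ 0 by simp)
      exact (not_mem_spectrum_iff _ _).2 ⟨_, by linarith, h2⟩ hE
    · have : E ∈ ⋃ s ∈ F, Metric.ball s ρ := by
        by_contra h
        exact hEC ⟨abs_le.1 hEM, h⟩
      simp only [mem_iUnion] at this
      obtain ⟨s, hs, hEs⟩ := this
      exact ⟨Sum.inl ⟨s, hs⟩, Metric.ball_subset_closedBall hEs⟩
  · rw [Fintype.sum_sum_type]
    simp only [Sum.elim_inl, Sum.elim_inr, Finset.sum_const, nsmul_eq_mul, Finset.card_univ]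
    rw [hcard, hρα]
    push_cast
    have h1 : (Fintype.card F : ℝ) * (η / (2 * (Fintype.card F + 1))) < η / 2 := by
      rw [mul_div_assoc', div_lt_div_iff₀ (by positivity) two_pos]
      nlinarith
    linarith

/-! ### Genericity -/

/-- Coupling-constant version: if `S ⊆ ℝ` is discrete, `Y ⊆ ℝ^k` is a closed
perfect set, `Z ⊆ ℝ∖{0}` is σ-compact, and `λY` is gap-rich with exceptional set
`S` for every `λ ∈ Z`, then for generic `y ∈ LP(ℤ,Y)` the spectrum of `H_{λy}`
is a Cantor set of zero Hausdorff dimension for all `λ ∈ Z`. -/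
theorem gapRich_coupling_generic_zero_dim_cantor (k : ℕ) (hk : 0 < k)
    (S : Set ℝ) (hS : IsDiscreteSet S)
    (Y : Set (Fin k → ℝ)) (hY : Perfect Y)
    (Z : Set ℝ) (hZ0 : ∀ lam ∈ Z, lam ≠ 0) (hZσ : IsSigmaCompact Z)
    (hGR : ∀ lam ∈ Z, GapRich k ((fun w => lam • w) '' Y) S) :
    ∃ R : Set (LPY k Y), IsGδ R ∧ Dense R ∧
      ∀ y ∈ R, ∀ lam ∈ Z,
        IsZeroDimCantor
          (SchrodingerSpectrum
            (fun n => lam * agg k (⇑(y : ℤ →ᵇ (Fin k → ℝ))) n)) := by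
  obtain ⟨K, hK, hKZ⟩ := hZσ
  have hKsub : ∀ i, ∀ lam ∈ K i, lam ∈ Z := fun i lam h => hKZ ▸ mem_iUnion_of_mem i h
  have hcomplete : CompleteSpace (LPY k Y) := isClosed_closure.completeSpace_coe
  -- `O i n` consists of the sequences with thin covers at scale `n` for all couplings in `K i`.
  let O : ℕ → ℕ → Set (LPY k Y) := fun i n => {y | ∀ lam ∈ K i,
    ThinCover (SchrodingerSpectrum (pot k lam y)) (1 / ((n : ℝ) + 1)) (1 / ((n : ℝ) + 1))}
  have hO : ∀ i n, Dense (interior (O i n)) := by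
    intro i n
    rw [Metric.dense_iff]
    intro y₀ ε hε
    obtain ⟨X, hX, hyX⟩ := Metric.mem_closure_iff.1 y₀.2 (ε / 2) (half_pos hε)
    have hn : (0 : ℝ) < 1 / ((n : ℝ) + 1) := by positivity
    obtain ⟨y, hy, hyX', δ, hδ, hball⟩ := exists_ball_thinCover hk hS (hK i)
      (fun lam h => hZ0 lam (hKsub i lam h)) (fun lam h => hGR lam (hKsub i lam h)) hn hn hX
      (show 0 < ε / 4 by positivity)
    refine ⟨⟨y, subset_closure hy⟩, ?_, ?_⟩
    · rw [Metric.mem_ball, Subtype.dist_eq]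
      have := dist_triangle y X y₀
      rw [dist_comm X] at this
      simp only
      linarith
    · rw [mem_interior]
      refine ⟨Metric.ball ⟨y, subset_closure hy⟩ δ, fun z hz => ?_, Metric.isOpen_ball,
        Metric.mem_ball_self hδ⟩
      rw [Metric.mem_ball, Subtype.dist_eq] at hz
      intro lam hlam
      exact hball z hz lam hlam
  refine ⟨⋂ t : ℕ × ℕ, interior (O t.1 t.2), IsGδ.iInter_of_isOpen fun t => isOpen_interior,
    dense_iInter_of_isOpen (fun t => isOpen_interior) fun t => hO t.1 t.2, ?_⟩
  intro y hy lam hlam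
  rw [← hKZ, mem_iUnion] at hlam
  obtain ⟨i, hi⟩ := hlam
  have hthin : ∀ n : ℕ, ThinCover (SchrodingerSpectrum (pot k lam y))
      (1 / ((n : ℝ) + 1)) (1 / ((n : ℝ) + 1)) := by
    intro n
    have hyn : y ∈ O i n := interior_subset (mem_iInter.1 hy (i, n))
    exact hyn lam hi
  have hdim := dimH_eq_zero_of_thinCover hthin
  rw [← coe_pot]
  refine ⟨spectrum_nonempty _, spectrum_isCompact _,
    spectrum_preperfect _ fun ε hε => pot_return hk lam y.2 hε, ?_, hdim⟩
  rw [← not_nonempty_iff_eq_empty]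
  intro hne
  rw [Real.dimH_of_nonempty_interior hne, Module.finrank_self] at hdim
  simp at hdim
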